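/- arXiv:2208.09050 — 14 statements merged into one kernel-verified Lean document; each statement's English description precedes it below -/
import Mathlib

section
/- Let G be a finite group and X ⊆ G a totally symmetric set of cardinality k > 3. Then |G| ≥ (k+1)!. -/
/-!
Choose for each permutation `π` of `X` an element `f π` of `G` inducing it by conjugation. The
elements `o * f π`, with `o ∈ X ∪ {1}`, turn out to be `(k + 1) * k!` distinct elements of `G`
(the identity is not in `X`, being conjugate to nothing else).

Since permutations of `X` act doubly transitively, either all elements of `X` commute or no two
distinct ones do. If they commute, `o * f π` still induces `π` on `X`, so it determines `π` and
then `o`. If they do not, the key fact is that `x⁻¹ * y * x ∉ X` for distinct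
`x y ∈ X` (`commute_of_conj_mem`). Now `o * f π = o' * f π'` makes `o'⁻¹ * o` normalize `X`; if
`o ≠ o'`, conjugating a suitable element by it puts some `x⁻¹ * y * x` in `X`, a contradiction.
-/

/-- A subset `X` of a group `G` is *totally symmetric* if every permutation of `X`
can be realized by conjugation by an element of `G`. -/
def IsTotallySymmetric {G : Type*} [Group G] (X : Set G) : Prop :=
  ∀ π : X ≃ X, ∃ g : G, ∀ x : X, g * (x : G) * g⁻¹ = ((π x : X) : G)

/-- If `z = x⁻¹ * y * x` lies in `X`, it must be `y`: `z = x` would give `y = x`, and any other `z`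
could be moved to a fourth element of `X` by conjugation by some `g` commuting with `x` and `y`,
although such a `g` also commutes with `z`. -/
lemma commute_of_conj_mem {G : Type*} [Group G] [Finite G] {X : Set G}
    (hX : IsTotallySymmetric X) (h3 : 3 < X.ncard) {x y : G} (hx : x ∈ X) (hy : y ∈ X)
    (hxy : x ≠ y) (hz : x⁻¹ * y * x ∈ X) : x * y = y * x := by
  classical
  by_contra hne
  have hzx : x⁻¹ * y * x ≠ x := by
    intro h
    apply hxy
    have h' : y * x = x * x := by rw [← mul_right_inj x⁻¹, ← mul_assoc, h]; group
    exact (mul_right_cancel h').symm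
  have hzy : x⁻¹ * y * x ≠ y := by
    intro h
    apply hne
    nth_rewrite 1 [← h]
    group
  obtain ⟨w, hw, hwn⟩ : ∃ w ∈ X, w ∉ ({x, y, x⁻¹ * y * x} : Set G) := by
    refine Set.exists_mem_notMem_of_ncard_lt_ncard (lt_of_le_of_lt ?_ h3) (Set.toFinite _)
    have h1 := Set.ncard_insert_le x {y, x⁻¹ * y * x}
    have h2 := Set.ncard_insert_le y {x⁻¹ * y * x}
    rw [Set.ncard_singleton] at h2
    omega
  simp only [Set.mem_insert_iff, Set.mem_singleton_iff, not_or] at hwn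
  obtain ⟨hwx, hwy, hwz⟩ := hwn
  obtain ⟨g, hg⟩ := hX (Equiv.swap ⟨_, hz⟩ ⟨w, hw⟩)
  have h1 := hg ⟨x, hx⟩
  have h2 := hg ⟨y, hy⟩
  have h4 := hg ⟨_, hz⟩
  rw [Equiv.swap_apply_of_ne_of_ne (by simpa [Subtype.ext_iff] using hzx.symm)
    (by simpa [Subtype.ext_iff] using Ne.symm hwx)] at h1
  rw [Equiv.swap_apply_of_ne_of_ne (by simpa [Subtype.ext_iff] using hzy.symm)
    (by simpa [Subtype.ext_iff] using Ne.symm hwy)] at h2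
  rw [Equiv.swap_apply_left] at h4
  simp only at h1 h2 h4
  apply hwz
  calc w = (g * x * g⁻¹)⁻¹ * (g * y * g⁻¹) * (g * x * g⁻¹) := by rw [← h4]; group
    _ = x⁻¹ * y * x := by rw [h1, h2]

/-- One commuting pair forces all pairs to commute, by double transitivity. -/
lemma commute_all_of_commute {G : Type*} [Group G] {X : Set G} (hX : IsTotallySymmetric X)
    {x y : G} (hx : x ∈ X) (hy : y ∈ X) (hxy : x ≠ y) (hc : x * y = y * x)
    {a b : G} (ha : a ∈ X) (hb : b ∈ X) : a * b = b * a := by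
  classical
  by_cases hab : a = b
  · rw [hab]
  let x' : X := ⟨x, hx⟩
  let y' : X := ⟨y, hy⟩
  let a' : X := ⟨a, ha⟩
  let b' : X := ⟨b, hb⟩
  have hxy' : x' ≠ y' := by simpa [x', y', Subtype.ext_iff] using hxy
  have hab' : a' ≠ b' := by simpa [a', b', Subtype.ext_iff] using hab
  have hac : a' ≠ Equiv.swap x' a' y' := by
    intro h
    apply hxy'
    apply (Equiv.swap x' a').injective
    rw [← h, Equiv.swap_apply_left]
  obtain ⟨g, hg⟩ := hX ((Equiv.swap x' a').trans (Equiv.swap (Equiv.swap x' a' y') b'))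
  have h1 := hg x'
  have h2 := hg y'
  rw [Equiv.trans_apply, Equiv.swap_apply_left, Equiv.swap_apply_of_ne_of_ne hac hab'] at h1
  rw [Equiv.trans_apply, Equiv.swap_apply_left] at h2
  change g * x * g⁻¹ = a at h1
  change g * y * g⁻¹ = b at h2
  calc a * b = g * (x * y) * g⁻¹ := by rw [← h1, ← h2]; group
    _ = g * (y * x) * g⁻¹ := by rw [hc]
    _ = b * a := by rw [← h1, ← h2]; group

lemma one_notMem_of_isTotallySymmetric {G : Type*} [Group G] [Finite G] {X : Set G}
    (hX : IsTotallySymmetric X) (h1 : 1 < X.ncard) : (1 : G) ∉ X := by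
  classical
  intro h
  obtain ⟨y, hy, hne⟩ := Set.exists_ne_of_one_lt_ncard h1 1
  obtain ⟨g, hg⟩ := hX (Equiv.swap ⟨1, h⟩ ⟨y, hy⟩)
  have h2 := hg ⟨1, h⟩
  rw [Equiv.swap_apply_left] at h2
  apply hne
  simpa using h2.symm

theorem totally_symmetric_card_lower_bound {G : Type*} [Group G] [Finite G]
    (X : Set G) (k : ℕ) (hX : IsTotallySymmetric X) (hk : X.ncard = k) (h3 : 3 < k) :
    (k + 1).factorial ≤ Nat.card G := by
  classical
  subst hk
  have h1X : (1 : G) ∉ X := one_notMem_of_isTotallySymmetric hX (by omega)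
  choose f hf using hX
  have hX : IsTotallySymmetric X := fun π => ⟨f π, hf π⟩
  let Y : Set G := insert 1 X
  let F : Y × Equiv.Perm X → G := fun p => p.1 * f p.2
  have hF : Function.Injective F := by
    by_cases hcomm : ∀ a ∈ X, ∀ b ∈ X, a * b = b * a
    · have hconj : ∀ (p : Y × Equiv.Perm X) (x : X), F p * x * (F p)⁻¹ = p.2 x := by
        rintro ⟨⟨o, ho⟩, π⟩ x
        have hoc : o * (π x : G) = π x * o := by
          rcases ho with rfl | ho
          · simp
          · exact hcomm _ ho _ (π x).2
        calc o * f π * x * (o * f π)⁻¹ = o * (f π * x * (f π)⁻¹) * o⁻¹ := by group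
          _ = π x := by rw [hf, hoc]; group
      intro p q hpq
      have h2 : p.2 = q.2 := by
        ext x
        rw [← hconj, ← hconj, hpq]
      refine Prod.ext (Subtype.ext ?_) h2
      simp only [F, h2] at hpq
      exact mul_right_cancel hpq
    · -- Here conjugation by an element of `X` sends no other element of `X` into `X`.
      have hno : ∀ x ∈ X, ∀ y ∈ X, x ≠ y → x⁻¹ * y * x ∉ X := by
        intro x hx y hy hxy hz
        exact hcomm fun a ha b hb => commute_all_of_commute hX hx hy hxy
          (commute_of_conj_mem hX h3 hx hy hxy hz) ha hb
      -- If `o * f π = o' * f π'`, then `o'⁻¹ * o` maps `X` into itself by conjugation.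
      have hstab : ∀ (o o' : G) (π π' : Equiv.Perm X), o * f π = o' * f π' →
          ∀ y ∈ X, o'⁻¹ * o * y * (o'⁻¹ * o)⁻¹ ∈ X := by
        intro o o' π π' h y hy
        have hn : o'⁻¹ * o = f π' * (f π)⁻¹ := by
          rw [inv_mul_eq_iff_eq_mul, ← mul_assoc, ← h]; group
        have hy' : (f π)⁻¹ * y * f π = (π.symm ⟨y, hy⟩ : X) := by
          have h4 := hf π (π.symm ⟨y, hy⟩)
          rw [Equiv.apply_symm_apply] at h4
          simp only at h4
          nth_rewrite 1 [← h4]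
          group
        have h5 : o'⁻¹ * o * y * (o'⁻¹ * o)⁻¹ = π' (π.symm ⟨y, hy⟩) := by
          rw [hn, ← hf π', ← hy']; group
        rw [h5]
        exact (π' _).2
      have hone : ∀ x ∈ X, ∀ π π' : Equiv.Perm X, (1 : G) * f π ≠ x * f π' := by
        intro x hx π π' h
        obtain ⟨y, hy, hne⟩ := Set.exists_ne_of_one_lt_ncard (by omega : 1 < X.ncard) x
        refine hno x hx y hy hne.symm ?_
        simpa using hstab _ _ _ _ h y hy
      rintro ⟨⟨o, ho⟩, π⟩ ⟨⟨o', ho'⟩, π'⟩ h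
      change o * f π = o' * f π' at h
      have hoo : o = o' := by
        rcases ho with rfl | ho <;> rcases ho' with rfl | ho'
        · rfl
        · exact (hone _ ho' _ _ h).elim
        · exact (hone _ ho _ _ h.symm).elim
        · by_contra hne
          refine hno o' ho' o ho (Ne.symm hne) ?_
          have h6 := hstab _ _ _ _ h o ho
          have h7 : o'⁻¹ * o * o * (o'⁻¹ * o)⁻¹ = o'⁻¹ * o * o' := by group
          rwa [h7] at h6
      subst hoo
      have hff : f π = f π' := mul_left_cancel h
      have hπ : π = π' := by
        ext x
        rw [← hf, ← hf, hff]
      rw [hπ]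
  have hcard := Nat.card_le_card_of_injective F hF
  rw [Nat.card_prod, Nat.card_perm, Nat.card_coe_set_eq, Nat.card_coe_set_eq,
    Set.ncard_insert_of_notMem h1X] at hcard
  rwa [Nat.factorial_succ]
end

section
/- Let G be a finite group and X ⊆ G a totally symmetric set of cardinality k > 3. If |G| = (k+1)!, then G is isomorphic to the symmetric group S_{k+1}. -/
namespace TotallySymmetric

open Subgroup

variable {G : Type*} [Group G] {X : Set G}

/-- The conjugation action of the setwise stabilizer of `X` on `X`. -/
def conjPerm (X : Set G) : normalizer X →* Equiv.Perm X where
  toFun g :=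
    { toFun := fun x => ⟨g * x * (g : G)⁻¹, (mem_set_normalizer_iff.1 g.2 x).1 x.2⟩
      invFun := fun x => ⟨(g : G)⁻¹ * x * g, (mem_set_normalizer_iff''.1 g.2 x).1 x.2⟩
      left_inv := fun x => by ext; simp [mul_assoc]
      right_inv := fun x => by ext; simp [mul_assoc] }
  map_one' := by ext; simp
  map_mul' g h := by ext; simp [mul_assoc]

/-- Every permutation of `X` is realized by an element of the normalizer of `X`. -/
lemma exists_normalizer (hX : IsTotallySymmetric X) (π : Equiv.Perm X) :
    ∃ g ∈ normalizer X, ∀ x : X, g * (x : G) * g⁻¹ = π x := by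
  obtain ⟨g, hg⟩ := hX π
  refine ⟨g, mem_set_normalizer_iff.2 fun x => ⟨fun hx => ?_, fun hx => ?_⟩, hg⟩
  · rw [hg ⟨x, hx⟩]; exact (π _).2
  · have h := hg (π.symm ⟨_, hx⟩)
    rw [Equiv.apply_symm_apply] at h
    have h' : ((π.symm ⟨_, hx⟩ : X) : G) = x := by simpa using h
    exact h' ▸ (π.symm ⟨_, hx⟩).2

lemma exists_swap (hX : IsTotallySymmetric X) {c d : G} (hc : c ∈ X) (hd : d ∈ X) :
    ∃ g : G, g * c * g⁻¹ = d ∧ ∀ x ∈ X, x ≠ c → x ≠ d → g * x * g⁻¹ = x := by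
  classical
  obtain ⟨g, -, hg⟩ := exists_normalizer hX (Equiv.swap ⟨c, hc⟩ ⟨d, hd⟩)
  refine ⟨g, by simpa using hg ⟨c, hc⟩, fun x hx h1 h2 => ?_⟩
  have := hg ⟨x, hx⟩
  rwa [Equiv.swap_apply_of_ne_of_ne (by simpa using h1) (by simpa using h2)] at this

/-- The normalizer of `X` acts 2-transitively on `X`. -/
lemma exists_pair (hX : IsTotallySymmetric X) {a b c d : G} (ha : a ∈ X) (hb : b ∈ X)
    (hc : c ∈ X) (hd : d ∈ X) (hab : a ≠ b) (hcd : c ≠ d) :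
    ∃ g ∈ normalizer X, g * a * g⁻¹ = c ∧ g * b * g⁻¹ = d := by
  classical
  let A : X := ⟨a, ha⟩
  let B : X := ⟨b, hb⟩
  let C : X := ⟨c, hc⟩
  let D : X := ⟨d, hd⟩
  have hAB : A ≠ B := by simpa [A, B] using hab
  have hCD : C ≠ D := by simpa [C, D] using hcd
  obtain ⟨g, hgH, hg⟩ := exists_normalizer hX
    (Equiv.swap (Equiv.swap A C B) D * Equiv.swap A C)
  refine ⟨g, hgH, ?_, ?_⟩
  · have h := hg A
    rw [Equiv.Perm.mul_apply, Equiv.swap_apply_left, Equiv.swap_apply_of_ne_of_ne _ hCD] at h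
    · exact h
    · intro h
      apply hAB
      apply (Equiv.swap A C).injective
      rw [← h, Equiv.swap_apply_left]
  · have h := hg B
    rw [Equiv.Perm.mul_apply, Equiv.swap_apply_left] at h
    exact h

/-- If `g` commutes with every element fixing `a, b ∈ X`, then conjugation by `g` cannot move
`x ∈ X` to a point `z ≠ a, b` as soon as there is a further point `d` of `X`: an element
exchanging `z` and `d` and fixing `a`, `b`, `x` would have to commute with `g`. -/
lemma conj_rigid (hX : IsTotallySymmetric X) {a b g x d : G} (ha : a ∈ X) (hb : b ∈ X)
    (hg : ∀ h : G, h * a * h⁻¹ = a → h * b * h⁻¹ = b → h * g * h⁻¹ = g)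
    (hx : x ∈ X) (hz : g * x * g⁻¹ ∈ X) (hza : g * x * g⁻¹ ≠ a) (hzb : g * x * g⁻¹ ≠ b)
    (hzx : g * x * g⁻¹ ≠ x) (hd : d ∈ X) (hda : d ≠ a) (hdb : d ≠ b) (hdx : d ≠ x)
    (hdz : d ≠ g * x * g⁻¹) : False := by
  obtain ⟨h, h1, h2⟩ := exists_swap hX hz hd
  have e1 := hg h (h2 a ha hza.symm hda.symm) (h2 b hb hzb.symm hdb.symm)
  have e2 := h2 x hx hzx.symm hdx.symm
  apply hdz
  calc d = h * (g * x * g⁻¹) * h⁻¹ := h1.symm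
    _ = (h * g * h⁻¹) * (h * x * h⁻¹) * (h * g * h⁻¹)⁻¹ := by group
    _ = g * x * g⁻¹ := by rw [e1, e2]

lemma exists_fourth {α : Type*} {X : Set α} (h3 : 3 < X.ncard) (a b c : α) :
    ∃ d ∈ X, d ≠ a ∧ d ≠ b ∧ d ≠ c := by
  classical
  have hle : ({a, b, c} : Set α).ncard ≤ 3 := by
    have := Finset.card_le_three (a := a) (b := b) (c := c)
    rw [← Set.ncard_coe_finset] at this
    simpa using this
  obtain ⟨d, hd, hd'⟩ := Set.exists_mem_notMem_of_ncard_lt_ncard (hle.trans_lt h3)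
  exact ⟨d, hd, by simpa using hd'⟩

lemma mem_centralizer_of_conj {g : G} (h : ∀ x ∈ X, g * x * g⁻¹ = x) : g ∈ centralizer X :=
  mem_centralizer_iff.2 fun x hx => (mul_inv_eq_iff_eq_mul.1 (h x hx)).symm

lemma conj_of_mem_centralizer {g x : G} (h : g ∈ centralizer X) (hx : x ∈ X) :
    g * x * g⁻¹ = x :=
  mul_inv_eq_iff_eq_mul.2 (mem_centralizer_iff.1 h x hx).symm

lemma index_mul_card_centralizer [Finite G] (hX : IsTotallySymmetric X)
    (hcard : Nat.card G = (X.ncard + 1).factorial) :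
    (normalizer X).index * Nat.card (centralizer X) = X.ncard + 1 := by
  have hsurj : Function.Surjective (conjPerm X) := fun π => by
    obtain ⟨g, hgH, hg⟩ := exists_normalizer hX π
    exact ⟨⟨g, hgH⟩, Equiv.ext fun x => Subtype.ext (hg x)⟩
  have hle : centralizer X ≤ normalizer X := fun g hg => by
    rw [mem_set_normalizer_iff]
    refine fun x => ⟨fun hx => by rwa [conj_of_mem_centralizer hg hx], fun hx => ?_⟩
    have := conj_of_mem_centralizer (inv_mem hg) hx
    have h2 : x = g * x * g⁻¹ := by
      rw [← this]; group
    rwa [h2]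
  have hker : (conjPerm X).ker = (centralizer X).subgroupOf (normalizer X) := by
    ext g
    rw [MonoidHom.mem_ker, mem_subgroupOf]
    constructor
    · intro h
      refine mem_centralizer_of_conj fun x hx => ?_
      exact congrArg Subtype.val (Equiv.ext_iff.1 h ⟨x, hx⟩)
    · intro h
      exact Equiv.ext fun x => Subtype.ext (conj_of_mem_centralizer h x.2)
  have h1 : (conjPerm X).ker.index = X.ncard.factorial := by
    rw [index_ker, MonoidHom.range_eq_top.2 hsurj, card_top, Nat.card_perm,
      Nat.card_coe_set_eq]
  have h2 := (conjPerm X).ker.card_mul_index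
  have h3 : Nat.card (conjPerm X).ker = Nat.card (centralizer X) := by
    rw [hker]
    exact Nat.card_congr (subgroupOfEquivOfLe hle).toEquiv
  have h4 := (normalizer X).card_mul_index
  rw [hcard, ← h2, h1, h3, Nat.factorial_succ] at h4
  apply Nat.eq_of_mul_eq_mul_right X.ncard.factorial_pos
  rw [← h4]
  ring

/-- No element of `X` normalizes `X`; otherwise `X` would be commutative and
`centralizer X = X ∪ {1}`. -/
lemma notMem_normalizer [Finite G] (hX : IsTotallySymmetric X) (h3 : 3 < X.ncard)
    (hcard : Nat.card G = (X.ncard + 1).factorial) {a : G} (ha : a ∈ X) :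
    a ∉ normalizer X := by
  intro haH
  have hmul := index_mul_card_centralizer hX hcard
  have hall : ∀ b ∈ X, b ∈ normalizer X := by
    intro b hb
    obtain ⟨a', ha', hne, -⟩ := exists_fourth h3 a a a
    obtain ⟨b', hb', hne', -⟩ := exists_fourth h3 b b b
    obtain ⟨g, hg, h1, -⟩ := exists_pair hX ha ha' hb hb' hne.symm hne'.symm
    rw [← h1]
    exact mul_mem (mul_mem hg haH) (inv_mem hg)
  have hcent : ∀ b ∈ X, b ∈ centralizer X := by
    intro b hb
    refine mem_centralizer_of_conj fun x hx => ?_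
    by_contra hne
    have hxb : x ≠ b := by rintro rfl; simp at hne
    have hzb : b * x * b⁻¹ ≠ b := fun h => hxb (by
      rw [mul_inv_eq_iff_eq_mul] at h
      exact mul_left_cancel h)
    obtain ⟨d, hd, hdb, hdx, hdz⟩ := exists_fourth h3 b x (b * x * b⁻¹)
    exact conj_rigid hX hb hb (fun h hh _ => hh) hx
      ((mem_set_normalizer_iff.1 (hall b hb) x).1 hx) hzb hzb hne hd hdb hdb hdx hdz
  have hone : (1 : G) ∉ X := by
    intro h1
    obtain ⟨d, hd, hd1, -⟩ := exists_fourth h3 1 1 1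
    obtain ⟨g, hg, -⟩ := exists_swap hX h1 hd
    exact hd1 (by simpa using hg.symm)
  have hsub : insert 1 X ⊆ (centralizer X : Set G) :=
    Set.insert_subset (one_mem _) fun b hb => hcent b hb
  have heq : insert 1 X = (centralizer X : Set G) := by
    apply Set.eq_of_subset_of_ncard_le hsub
    rw [Set.ncard_insert_of_notMem hone, ← Nat.card_coe_set_eq]
    exact Nat.le_of_dvd (Nat.succ_pos _) ⟨_, by rw [← hmul, mul_comm]; rfl⟩
  obtain ⟨b, hb, hba, hbi, -⟩ := exists_fourth h3 a a⁻¹ a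
  have hab : a * b ∈ X := by
    have : a * b ∈ insert 1 X := by
      rw [heq]; exact mul_mem (hcent a ha) (hcent b hb)
    refine this.resolve_left fun h => hbi (eq_inv_of_mul_eq_one_right h)
  have ha1 : a ≠ 1 := by rintro rfl; exact hone ha
  have hb1 : b ≠ 1 := by rintro rfl; exact hone hb
  obtain ⟨d, hd, hda, hdb, hdab⟩ := exists_fourth h3 a b (a * b)
  obtain ⟨h, h1, h2⟩ := exists_swap hX hab hd
  have e1 := h2 a ha (by simpa using hb1) hda.symm
  have e2 := h2 b hb (by simpa using ha1) hdb.symm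
  apply hdab
  calc d = (h * a * h⁻¹) * (h * b * h⁻¹) := by rw [← h1]; group
    _ = a * b := by rw [e1, e2]

/-- Conjugation by `y = a⁻¹ * b` cannot exchange `a` and `b`: it would make `y` and `y ^ 2`
conjugate, so `y` would have odd order and conjugation by `1 = y ^ orderOf y` would move `a`. -/
lemma not_swap [Finite G] {a b : G} (hab : a ≠ b)
    (h1 : (a⁻¹ * b) * a * (a⁻¹ * b)⁻¹ = b) (h2 : (a⁻¹ * b) * b * (a⁻¹ * b)⁻¹ = a) : False := by
  obtain ⟨y, hy⟩ : ∃ y, y = a⁻¹ * b := ⟨_, rfl⟩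
  rw [← hy] at h1 h2
  have hb : b = a * y := by rw [hy]; group
  have hconj : a⁻¹ * y * a⁻¹⁻¹ = y ^ 2 := by
    have h : y * a = b * y := mul_inv_eq_iff_eq_mul.1 h1
    rw [inv_inv, mul_assoc, h, hb, pow_two]
    group
  have hord : orderOf (y ^ 2) = orderOf y := by
    rw [← hconj]
    apply orderOf_injective (MulAut.conj a⁻¹).toMonoidHom (MulAut.conj a⁻¹).injective
  have hodd : Odd (orderOf y) := by
    rw [orderOf_pow] at hord
    by_contra hne
    rw [Nat.not_odd_iff_even] at hne
    rw [Nat.gcd_eq_right hne.two_dvd] at hord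
    have := orderOf_pos y
    omega
  have hsq : y ^ 2 * a = a * y ^ 2 := by
    rw [← mul_inv_eq_iff_eq_mul]
    calc y ^ 2 * a * (y ^ 2)⁻¹ = y * (y * a * y⁻¹) * y⁻¹ := by rw [pow_two]; group
      _ = a := by rw [h1, h2]
  obtain ⟨m, hm⟩ := hodd
  have hy1 : (y ^ 2) ^ m * y = 1 := by
    rw [← pow_mul, ← pow_succ, ← hm, pow_orderOf_eq_one]
  have hcomm : Commute a y := by
    have hy' : y = ((y ^ 2) ^ m)⁻¹ := eq_inv_of_mul_eq_one_right hy1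
    rw [hy']
    exact ((show Commute a (y ^ 2) from hsq.symm).pow_right m).inv_right
  apply hab
  rw [← h1, ← hcomm.eq, mul_inv_cancel_right]

/-- Distinct points of `X` lie in distinct left cosets of the normalizer of `X`. -/
lemma inv_mul_notMem_normalizer [Finite G] (hX : IsTotallySymmetric X) (h3 : 3 < X.ncard)
    (hcard : Nat.card G = (X.ncard + 1).factorial) {a b : G} (ha : a ∈ X) (hb : b ∈ X)
    (hab : a ≠ b) : a⁻¹ * b ∉ normalizer X := by
  intro habH
  have hmul := index_mul_card_centralizer hX hcard
  have hall : ∀ c ∈ X, ∀ d ∈ X, c ≠ d → c⁻¹ * d ∈ normalizer X := by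
    intro c hc d hd hcd
    obtain ⟨g, hg, h1, h2⟩ := exists_pair hX ha hb hc hd hab hcd
    have : c⁻¹ * d = g * (a⁻¹ * b) * g⁻¹ := by rw [← h1, ← h2]; group
    rw [this]
    exact mul_mem (mul_mem hg habH) (inv_mem hg)
  -- conjugation by `c⁻¹ * d` preserves the pair `{c, d}`
  have hpair : ∀ c ∈ X, ∀ d ∈ X, c ≠ d → ∀ x, (x = c ∨ x = d) →
      (c⁻¹ * d) * x * (c⁻¹ * d)⁻¹ = c ∨ (c⁻¹ * d) * x * (c⁻¹ * d)⁻¹ = d := by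
    intro c hc d hd hcd x hxcd
    have hx : x ∈ X := by rcases hxcd with rfl | rfl <;> assumption
    by_contra! hne
    obtain ⟨e, he, hec, hed, hez⟩ := exists_fourth h3 c d ((c⁻¹ * d) * x * (c⁻¹ * d)⁻¹)
    have hex : e ≠ x := by rcases hxcd with rfl | rfl <;> assumption
    have hzx : (c⁻¹ * d) * x * (c⁻¹ * d)⁻¹ ≠ x := by
      intro h
      rcases hxcd with rfl | rfl
      · exact hne.1 h
      · exact hne.2 h
    refine conj_rigid hX hc hd (fun h e1 e2 => ?_) hx
      ((mem_set_normalizer_iff.1 (hall c hc d hd hcd) x).1 hx) hne.1 hne.2 hzx he hec hed hex hez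
    calc h * (c⁻¹ * d) * h⁻¹ = (h * c * h⁻¹)⁻¹ * (h * d * h⁻¹) := by group
      _ = c⁻¹ * d := by rw [e1, e2]
  have hfix : ∀ c ∈ X, ∀ d ∈ X, c ≠ d →
      (c⁻¹ * d) * c * (c⁻¹ * d)⁻¹ = c ∧ (c⁻¹ * d) * d * (c⁻¹ * d)⁻¹ = d := by
    intro c hc d hd hcd
    have hinj : (c⁻¹ * d) * c * (c⁻¹ * d)⁻¹ ≠ (c⁻¹ * d) * d * (c⁻¹ * d)⁻¹ :=
      fun h => hcd ((MulAut.conj (c⁻¹ * d)).injective h)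
    rcases hpair c hc d hd hcd c (Or.inl rfl) with h1 | h1 <;>
    rcases hpair c hc d hd hcd d (Or.inr rfl) with h2 | h2
    · exact absurd (h1.trans h2.symm) hinj
    · exact ⟨h1, h2⟩
    · exact (not_swap hcd h1 h2).elim
    · exact absurd (h1.trans h2.symm) hinj
  have hcent : ∀ c ∈ X, a⁻¹ * c ∈ centralizer X := by
    intro c hc
    by_cases hac : a = c
    · subst hac; simp
    refine mem_centralizer_of_conj fun x hx => ?_
    by_cases hxa : x = a
    · subst hxa; exact (hfix x hx c hc hac).1
    by_cases hxc : x = c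
    · subst hxc; exact (hfix a ha x hx hac).2
    have e1 := (hfix x hx c hc hxc).1
    have e2 := (hfix a ha x hx (Ne.symm hxa)).2
    calc a⁻¹ * c * x * (a⁻¹ * c)⁻¹
        = (a⁻¹ * x) * ((x⁻¹ * c) * x * (x⁻¹ * c)⁻¹) * (a⁻¹ * x)⁻¹ := by group
      _ = x := by rw [e1, e2]
  have hkN : X.ncard ≤ Nat.card (centralizer X) := by
    rw [← Nat.card_coe_set_eq]
    apply Nat.card_le_card_of_injective
      (fun c : X => (⟨a⁻¹ * c, hcent c c.2⟩ : centralizer X))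
    intro c d h
    exact Subtype.ext (mul_left_cancel (congrArg Subtype.val h))
  have hidx : (normalizer X).index = 1 := by
    have hpos : (normalizer X).index ≠ 0 := index_ne_zero_of_finite
    by_contra hne
    have h2 : 2 ≤ (normalizer X).index := by omega
    have := Nat.mul_le_mul h2 hkN
    omega
  apply notMem_normalizer hX h3 hcard ha
  rw [index_eq_one.1 hidx]
  exact mem_top a

end TotallySymmetric

open TotallySymmetric Subgroup in
theorem totally_symmetric_card_eq_iff_symm {G : Type*} [Group G] [Finite G]
    (X : Set G) (k : ℕ) (hX : IsTotallySymmetric X) (hk : X.ncard = k) (h3 : 3 < k)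
    (hcard : Nat.card G = (k + 1).factorial) :
    Nonempty (G ≃* Equiv.Perm (Fin (k + 1))) := by
  subst hk
  have hmul := index_mul_card_centralizer hX hcard
  have hdist : ∀ a ∈ X, ∀ b ∈ X, (a : G ⧸ normalizer X) = b → a = b := by
    intro a ha b hb h
    by_contra hab
    exact inv_mul_notMem_normalizer hX h3 hcard ha hb hab (QuotientGroup.eq.1 h)
  have hle : X.ncard + 1 ≤ (normalizer X).index := by
    -- `none` stands for the trivial coset
    let f : Option X → G ⧸ normalizer X := fun o => o.elim ((1 : G) : G ⧸ normalizer X)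
      fun x => ((x : G) : G ⧸ normalizer X)
    have hone : ∀ a : X, ((1 : G) : G ⧸ normalizer X) ≠ (a : G) := fun a h =>
      notMem_normalizer hX h3 hcard a.2 (by simpa using QuotientGroup.eq.1 h)
    have hf : Function.Injective f := by
      rintro (_ | a) (_ | b) h
      · rfl
      · exact (hone b h).elim
      · exact (hone a h.symm).elim
      · exact congrArg some (Subtype.ext (hdist a a.2 b b.2 h))
    have := Nat.card_le_card_of_injective f hf
    rwa [Finite.card_option, Nat.card_coe_set_eq] at this
  have hNpos : 0 < Nat.card (centralizer X) := Nat.card_pos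
  have hidx : (normalizer X).index = X.ncard + 1 :=
    le_antisymm (hmul ▸ Nat.le_mul_of_pos_right _ hNpos) hle
  have hN : centralizer X = ⊥ := by
    rw [hidx] at hmul
    exact card_eq_one.1 ((Nat.mul_eq_left (Nat.succ_ne_zero _)).1 hmul)
  have hcardQ : Nat.card (G ⧸ normalizer X) = X.ncard + 1 := hidx
  have hinj : Function.Injective (MulAction.toPermHom G (G ⧸ normalizer X)) := by
    rw [injective_iff_map_eq_one]
    intro g hg
    have hact : ∀ a : G, ((g * a : G) : G ⧸ normalizer X) = a := fun a =>
      Equiv.ext_iff.1 hg (a : G ⧸ normalizer X)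
    have hgH : g ∈ normalizer X := by
      simpa using QuotientGroup.eq.1 (hact 1).symm
    have : g ∈ centralizer X := by
      refine mem_centralizer_of_conj fun x hx => ?_
      refine hdist _ ((mem_set_normalizer_iff.1 hgH x).1 hx) x hx ?_
      rw [← hact x, QuotientGroup.eq]
      simpa [mul_assoc] using hgH
    rwa [hN, mem_bot] at this
  have hbij := hinj.bijective_of_nat_card_le
    (by rw [Nat.card_perm, hcardQ, hcard])
  have e : G ⧸ normalizer X ≃ Fin (X.ncard + 1) := Finite.equivFinOfCardEq hcardQ
  exact ⟨(MulEquiv.ofBijective _ hbij).trans e.permCongrHom⟩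
end

section
/- For every n ≥ 2, the set X_n = {(1 i) : i = 2,…,n} of transpositions is a totally symmetric set of cardinality n−1 in the symmetric group S_n. -/
/-- The bijection `i ↦ (a i)` from the points other than `a` to the transpositions moving `a`. -/
noncomputable def starEquiv {α : Type*} [DecidableEq α] (a : α) :
    {i : α // i ≠ a} ≃ {σ : Equiv.Perm α | ∃ i : α, i ≠ a ∧ σ = Equiv.swap a i} :=
  Equiv.ofBijective (fun i => ⟨Equiv.swap a i, i, i.2, rfl⟩) <| by
    constructor
    · intro i j h
      have h' : Equiv.swap a (i : α) = Equiv.swap a j := congrArg Subtype.val h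
      have := congrArg (fun σ : Equiv.Perm α => σ a) h'
      exact Subtype.ext (by simpa using this)
    · rintro ⟨σ, i, hi, rfl⟩
      exact ⟨⟨i, hi⟩, rfl⟩

theorem starEquiv_coe {α : Type*} [DecidableEq α] (a : α) (i : {i : α // i ≠ a}) :
    (starEquiv a i : Equiv.Perm α) = Equiv.swap a i := rfl

theorem isTotallySymmetric_star {α : Type*} [DecidableEq α] (a : α) :
    IsTotallySymmetric {σ : Equiv.Perm α | ∃ i : α, i ≠ a ∧ σ = Equiv.swap a i} := by
  intro π
  let τ : Equiv.Perm {i : α // i ≠ a} := ((starEquiv a).trans π).trans (starEquiv a).symm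
  refine ⟨Equiv.Perm.ofSubtype τ, fun x => ?_⟩
  obtain ⟨i, rfl⟩ := (starEquiv a).surjective x
  have hτ : π (starEquiv a i) = starEquiv a (τ i) := by simp [τ]
  have ha : Equiv.Perm.ofSubtype τ a = a :=
    Equiv.Perm.ofSubtype_apply_of_not_mem τ (by simp)
  rw [hτ, starEquiv_coe, starEquiv_coe, ← Equiv.swap_apply_apply, ha,
    Equiv.Perm.ofSubtype_apply_coe]

theorem transpositions_totally_symmetric (n : ℕ) (hn : 2 ≤ n) :
    IsTotallySymmetric
      {σ : Equiv.Perm (Fin n) | ∃ i : Fin n, i ≠ ⟨0, by omega⟩ ∧ σ = Equiv.swap ⟨0, by omega⟩ i} ∧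
    ({σ : Equiv.Perm (Fin n) | ∃ i : Fin n, i ≠ ⟨0, by omega⟩ ∧ σ = Equiv.swap ⟨0, by omega⟩ i}).ncard
      = n - 1 := by
  refine ⟨isTotallySymmetric_star _, ?_⟩
  rw [← Nat.card_coe_set_eq, ← Nat.card_congr (starEquiv _), Nat.card_eq_fintype_card]
  simp [Fintype.card_subtype_compl]
end

section
/- If X is a totally symmetric subset of the symmetric group S_n of cardinality k > 3, then k ≤ n − 1. -/
/-- Conjugation by `x ∈ X` fixes every `y ∈ X` that it does not move out of `X`. Otherwise a
transposition of `X` moving `x y x⁻¹` but neither `x` nor `y` would be realized by some `g`; this `g`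
commutes with `x` and `y`, hence with `x y x⁻¹`. Such a transposition exists as `X` has a fourth
element. -/
theorem IsTotallySymmetric.conj_eq_self {G : Type*} [Group G] [Finite G] {X : Set G}
    (hX : IsTotallySymmetric X) (h3 : 3 < X.ncard) {x y : G} (hx : x ∈ X) (hy : y ∈ X)
    (hz : x * y * x⁻¹ ∈ X) : x * y * x⁻¹ = y := by
  classical
  by_contra hne
  have hzx : x * y * x⁻¹ ≠ x := by
    intro h
    have hyx : y = x := mul_left_cancel (mul_inv_eq_iff_eq_mul.1 h)
    subst hyx
    simp at hne
  obtain ⟨w, hw, hwn⟩ : ∃ w ∈ X, w ∉ ({x, y, x * y * x⁻¹} : Set G) := by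
    by_contra! h
    have h1 := Set.ncard_le_ncard (t := ({x, y, x * y * x⁻¹} : Set G)) h (Set.toFinite _)
    have h2 : ({x, y, x * y * x⁻¹} : Set G).ncard ≤ 3 := by
      have h4 := Set.ncard_insert_le x {y, x * y * x⁻¹}
      have h5 := Set.ncard_insert_le y {x * y * x⁻¹}
      rw [Set.ncard_singleton] at h5
      omega
    omega
  simp only [Set.mem_insert_iff, Set.mem_singleton_iff, not_or] at hwn
  obtain ⟨hwx, hwy, hwz⟩ := hwn
  -- The transposition of `x y x⁻¹` and `w` fixes both `x` and `y`.
  obtain ⟨g, hg⟩ := hX (Equiv.swap ⟨x * y * x⁻¹, hz⟩ ⟨w, hw⟩)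
  have gx : g * x * g⁻¹ = x := by
    have := hg ⟨x, hx⟩
    rwa [Equiv.swap_apply_of_ne_of_ne (by simpa [Subtype.ext_iff] using Ne.symm hzx)
      (by simpa [Subtype.ext_iff] using Ne.symm hwx)] at this
  have gy : g * y * g⁻¹ = y := by
    have := hg ⟨y, hy⟩
    rwa [Equiv.swap_apply_of_ne_of_ne (by simpa [Subtype.ext_iff] using Ne.symm hne)
      (by simpa [Subtype.ext_iff] using Ne.symm hwy)] at this
  have gz : g * (x * y * x⁻¹) * g⁻¹ = w := by
    have := hg ⟨x * y * x⁻¹, hz⟩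
    rwa [Equiv.swap_apply_left] at this
  apply hwz
  rw [← gz]
  calc g * (x * y * x⁻¹) * g⁻¹
      = (g * x * g⁻¹) * (g * y * g⁻¹) * (g * x * g⁻¹)⁻¹ := by group
    _ = x * y * x⁻¹ := by rw [gx, gy]

theorem totally_symmetric_card_le {n : ℕ} (X : Set (Equiv.Perm (Fin n))) (k : ℕ)
    (hX : IsTotallySymmetric X) (hk : X.ncard = k) (h3 : 3 < k) :
    k ≤ n - 1 := by
  classical
  choose g hg using id hX
  have hinj : Function.Injective g := by
    intro π σ h
    ext1 x
    apply Subtype.ext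
    rw [← hg π x, ← hg σ x, h]
  have hcardX : Fintype.card X = k := by
    rw [← hk, ← Nat.card_coe_set_eq, Nat.card_eq_fintype_card]
  have hfac : k.factorial ≤ n.factorial := by
    have := Fintype.card_le_of_injective g hinj
    rwa [Fintype.card_perm, Fintype.card_perm, hcardX, Fintype.card_fin] at this
  have hkn : k ≤ n := by
    by_contra! h
    have : n.factorial < k.factorial :=
      lt_of_le_of_lt (Nat.factorial_le (by omega : n ≤ k - 1))
        ((Nat.factorial_lt (by omega)).2 (by omega))
    omega
  by_contra hlt
  have hkeq : k = n := by omega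
  have hsurj : Function.Surjective g := by
    refine ((Fintype.bijective_iff_injective_and_card g).2 ⟨hinj, ?_⟩).2
    rw [Fintype.card_perm, Fintype.card_perm, hcardX, Fintype.card_fin, hkeq]
  have hone : ∀ x ∈ X, x = 1 := by
    intro x hx
    obtain ⟨π, hπ⟩ := hsurj x
    obtain ⟨σ, hσ⟩ := hsurj 1
    rw [← hπ, ← hσ]
    congr 1
    ext1 y
    apply Subtype.ext
    rw [← hg π y, ← hg σ y, hπ, hσ]
    have hmem : x * (y : Equiv.Perm (Fin n)) * x⁻¹ ∈ X := by
      rw [← hπ, hg π y]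
      exact (π y).2
    rw [hX.conj_eq_self (by omega) hx y.2 hmem]
    simp
  have : X.ncard ≤ 1 :=
    (Set.ncard_le_ncard (t := {1}) hone (Set.toFinite _)).trans (Set.ncard_singleton _).le
  omega
end

section
/- Let n ≥ 5 with n ≠ 6, and let Y ⊆ S_n be a totally symmetric set of cardinality n − 1. Then Y is conjugate to X_n, i.e., there exists g ∈ S_n with g X_n g⁻¹ = Y. -/
open Equiv Equiv.Perm Subgroup
open scoped Nat

/-! ### Size of centralizers -/

lemma doubleFactorial_mono : Monotone Nat.doubleFactorial := by
  refine monotone_nat_of_le_succ fun s => ?_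
  induction s using Nat.twoStepInduction with
  | zero => decide
  | one => decide
  | more s ih _ =>
    rw [Nat.doubleFactorial_add_two, show s + 2 + 1 = s + 1 + 2 by ring,
      Nat.doubleFactorial_add_two]
    exact Nat.mul_le_mul (by omega) ih

/-- A permutation with nontrivial cycle lengths `m` has `m.prod * ∏ (m.count a)!` elements
commuting with it on its support; adding a cycle of length `a` multiplies this number by
`a * (m.count a + 1) ≤ (a ::ₘ m).sum`. -/
lemma prod_mul_prod_count_factorial_le (m : Multiset ℕ) (hm : ∀ a ∈ m, 2 ≤ a) :
    m.prod * ∏ a ∈ m.toFinset, (m.count a)! ≤ m.sum‼ := by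
  induction m using Multiset.induction_on with
  | empty => simp
  | cons a m ih =>
    have ha : 2 ≤ a := hm a (Multiset.mem_cons_self a m)
    have ih := ih fun b hb => hm b (Multiset.mem_cons_of_mem hb)
    have hprod : ∏ b ∈ (a ::ₘ m).toFinset, ((a ::ₘ m).count b)!
        = (m.count a + 1) * ∏ b ∈ m.toFinset, (m.count b)! := by
      have h1 : ∏ b ∈ m.toFinset, (m.count b)! = ∏ b ∈ insert a m.toFinset, (m.count b)! := by
        refine Finset.prod_subset (Finset.subset_insert _ _) fun b _ hb => ?_
        rw [Multiset.mem_toFinset] at hb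
        simp [Multiset.count_eq_zero_of_notMem hb]
      rw [h1, Multiset.toFinset_cons,
        ← Finset.mul_prod_erase _ _ (Finset.mem_insert_self a m.toFinset),
        ← Finset.mul_prod_erase _ (fun b => (m.count b)!) (Finset.mem_insert_self a m.toFinset),
        Multiset.count_cons_self, Nat.factorial_succ, mul_assoc]
      congr 2
      refine Finset.prod_congr rfl fun b hb => ?_
      rw [Multiset.count_cons_of_ne (Finset.ne_of_mem_erase hb)]
    have hcount : a * m.count a ≤ m.sum := by
      have h : Multiset.replicate (m.count a) a ≤ m := Multiset.le_count_iff_replicate_le.1 le_rfl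
      obtain ⟨u, hu⟩ := Multiset.le_iff_exists_add.1 h
      have hsum := congrArg Multiset.sum hu
      rw [Multiset.sum_add, Multiset.sum_replicate, smul_eq_mul] at hsum
      rw [mul_comm]
      omega
    obtain ⟨c, rfl⟩ := Nat.exists_eq_add_of_le ha
    have hmono : m.sum‼ ≤ (m.sum + c)‼ := doubleFactorial_mono (Nat.le_add_right _ _)
    rw [hprod, Multiset.prod_cons, Multiset.sum_cons,
      show 2 + c + m.sum = m.sum + c + 2 by ring, Nat.doubleFactorial_add_two]
    calc (2 + c) * m.prod * ((m.count (2 + c) + 1) * ∏ b ∈ m.toFinset, (m.count b)!)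
        = ((2 + c) * m.count (2 + c) + (2 + c)) *
            (m.prod * ∏ b ∈ m.toFinset, (m.count b)!) := by ring
      _ ≤ (m.sum + c + 2) * (m.sum + c)‼ := by
          refine Nat.mul_le_mul (by omega) (ih.trans hmono)

lemma card_centralizer_le {n : ℕ} (y : Perm (Fin n)) :
    Nat.card (centralizer {y}) ≤ (n - y.support.card)! * y.support.card‼ := by
  rw [nat_card_centralizer, Fintype.card_fin, mul_assoc, ← sum_cycleType]
  exact Nat.mul_le_mul le_rfl
    (prod_mul_prod_count_factorial_le _ fun _ => two_le_of_mem_cycleType)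

lemma doubleFactorial_lt_factorial (s : ℕ) : (s + 7)‼ < (s + 5)! := by
  induction s using Nat.twoStepInduction with
  | zero => decide
  | one => decide
  | more s ih _ =>
    rw [show s + 2 + 7 = s + 7 + 2 by ring, Nat.doubleFactorial_add_two,
      show s + 2 + 5 = s + 5 + 1 + 1 by ring, Nat.factorial_succ, Nat.factorial_succ, ← mul_assoc]
    exact Nat.mul_lt_mul_of_le_of_lt (by nlinarith) ih (by positivity)

lemma factorial_mul_doubleFactorial_lt (f s : ℕ) (hs : 3 ≤ s) (h : 7 ≤ f + s) :
    f ! * s‼ < (f + s - 2)! := by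
  induction f with
  | zero =>
    obtain ⟨t, rfl⟩ := Nat.exists_eq_add_of_le' (show 7 ≤ s by omega)
    simpa using doubleFactorial_lt_factorial t
  | succ f ih =>
    rcases Nat.lt_or_ge (f + s) 7 with h' | h'
    · have : f = 6 - s := by omega
      subst this
      have : s ≤ 6 := by omega
      interval_cases s <;> decide
    · rw [show f + 1 + s - 2 = (f + s - 2) + 1 by omega, Nat.factorial_succ, Nat.factorial_succ,
        mul_assoc]
      exact Nat.mul_lt_mul_of_le_of_lt (by omega) (ih h') (by omega)

/-! ### Total symmetry forces transpositions -/

section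

variable {k : ℕ} {G : Type*} [Group G] {e : Option (Fin k) → G}

/-- Permutations of a totally symmetric family fixing the member `e none` lift injectively to the
centralizer of that member. -/
lemma exists_lift (hinj : Function.Injective e)
    (hsym : ∀ π : Perm (Option (Fin k)), ∃ g : G, ∀ i, g * e i * g⁻¹ = e (π i)) :
    ∃ s : Perm (Fin k) → centralizer {e none}, Function.Injective s ∧
      ∀ σ i, (s σ : G) * e (some i) * (s σ : G)⁻¹ = e (some (σ i)) := by
  choose g hg using fun σ : Perm (Fin k) => hsym (optionCongr σ)
  refine ⟨fun σ => ⟨g σ, ?_⟩, ?_, ?_⟩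
  · rw [mem_centralizer_singleton_iff]
    have := hg σ none
    simp only [optionCongr_apply, Option.map_none] at this
    exact mul_inv_eq_iff_eq_mul.1 this
  · intro σ τ h
    ext i : 1
    have h' : g σ = g τ := congrArg Subtype.val h
    have h1 := hg σ (some i)
    have h2 := hg τ (some i)
    rw [h', h2] at h1
    simpa using (hinj h1).symm
  · intro σ i
    simpa using hg σ (some i)

lemma factorial_le_card_centralizer [Finite G] (hinj : Function.Injective e)
    (hsym : ∀ π : Perm (Option (Fin k)), ∃ g : G, ∀ i, g * e i * g⁻¹ = e (π i)) :
    k ! ≤ Nat.card (centralizer {e none}) := by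
  obtain ⟨s, hs, -⟩ := exists_lift hinj hsym
  simpa [Fintype.card_perm] using Nat.card_le_card_of_injective s hs

lemma ne_one_of_symm (hk : 0 < k) (hinj : Function.Injective e)
    (hsym : ∀ π : Perm (Option (Fin k)), ∃ g : G, ∀ i, g * e i * g⁻¹ = e (π i)) :
    e none ≠ 1 := by
  intro h
  obtain ⟨g, hg⟩ := hsym (swap none (some ⟨0, hk⟩))
  have := hg none
  rw [h, swap_apply_left, mul_one, mul_inv_cancel, ← h] at this
  simpa using hinj this

end

/-- The case of equality in `factorial_le_card_centralizer` is impossible for `k = 3`: the lift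
would be onto, so the nontrivial element `e none` would act on the rest of the family as a central
permutation, hence trivially. -/
lemma card_centralizer_ne_six {G : Type*} [Group G] [Finite G] {e : Option (Fin 3) → G}
    (hinj : Function.Injective e)
    (hsym : ∀ π : Perm (Option (Fin 3)), ∃ g : G, ∀ i, g * e i * g⁻¹ = e (π i)) :
    Nat.card (centralizer {e none}) ≠ 6 := by
  intro hcard
  obtain ⟨s, hs, hact⟩ := exists_lift hinj hsym
  have hbij : Function.Bijective s := by
    refine (Nat.bijective_iff_injective_and_card s).2 ⟨hs, ?_⟩
    rw [hcard]; simp [Fintype.card_perm]; rfl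
  obtain ⟨σ, hσ⟩ := hbij.2 ⟨e none, by simp [mem_centralizer_singleton_iff]⟩
  obtain ⟨τ, hτ⟩ := hbij.2 1
  have hy : ∀ i, e none * e (some i) * (e none)⁻¹ = e (some (σ i)) := by
    intro i
    simpa [hσ] using hact σ i
  have hτ1 : τ = 1 := by
    ext i : 1
    have := hact τ i
    simp only [hτ, OneMemClass.coe_one, one_mul, inv_one, mul_one] at this
    simpa using (hinj this).symm
  have hcomm : ∀ ρ : Perm (Fin 3), ρ * σ = σ * ρ := by
    intro ρ
    ext i : 1
    have hc : (s ρ : G) * e none = e none * (s ρ : G) :=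
      mem_centralizer_singleton_iff.1 (s ρ).2
    have h : e (some (ρ (σ i))) = e (some (σ (ρ i))) := by
      rw [← hact, ← hy, ← hy, ← hact]
      calc (s ρ : G) * (e none * e (some i) * (e none)⁻¹) * (s ρ : G)⁻¹
          = ((s ρ : G) * e none) * e (some i) * ((s ρ : G) * e none)⁻¹ := by group
        _ = (e none * (s ρ : G)) * e (some i) * (e none * (s ρ : G))⁻¹ := by rw [hc]
        _ = _ := by group
    simpa using hinj h
  have hσ1 : σ = 1 := by
    revert hcomm
    clear hy hσ
    revert σ
    decide
  rw [hσ1, ← hτ1, hτ] at hσ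
  exact ne_one_of_symm (by norm_num) hinj hsym (congrArg Subtype.val hσ).symm

/-- An element of the centralizer acting as a 3-cycle has order divisible by `3`. -/
lemma card_centralizer_ne_eight {G : Type*} [Group G] [Finite G] {e : Option (Fin 3) → G}
    (hinj : Function.Injective e)
    (hsym : ∀ π : Perm (Option (Fin 3)), ∃ g : G, ∀ i, g * e i * g⁻¹ = e (π i)) :
    Nat.card (centralizer {e none}) ≠ 8 := by
  intro hcard
  obtain ⟨s, -, hact⟩ := exists_lift hinj hsym
  have hpow : ∀ (j : ℕ) (i : Fin 3), (s (finRotate 3) : G) ^ j * e (some i) *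
      ((s (finRotate 3) : G) ^ j)⁻¹ = e (some ((finRotate 3 ^ j) i)) := by
    intro j
    induction j with
    | zero => simp
    | succ j ih =>
      intro i
      rw [pow_succ' (finRotate 3), Perm.mul_apply, ← hact, ← ih, pow_succ']
      group
  have h8 : (s (finRotate 3) : G) ^ 8 = 1 := by
    have := pow_card_eq_one' (x := s (finRotate 3))
    rw [hcard] at this
    exact_mod_cast congrArg Subtype.val this
  have := hpow 8 0
  rw [h8, one_mul, inv_one, mul_one] at this
  have := Option.some_injective _ (hinj this)
  revert this
  decide

lemma card_centralizer_of_five (y : Perm (Fin 5)) (h3 : 3 ≤ y.support.card)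
    (h6 : 6 ≤ Nat.card (centralizer {y})) :
    Nat.card (centralizer {y}) = 6 ∨ Nat.card (centralizer {y}) = 8 := by
  rw [nat_card_centralizer, Fintype.card_fin] at *
  rw [← sum_cycleType] at h3
  have h5 : y.cycleType.sum ≤ 5 := by simpa using sum_cycleType_le y
  have h2 : ∀ a ∈ y.cycleType, 2 ≤ a := fun _ => two_le_of_mem_cycleType
  generalize y.cycleType = m at *
  have hc : Multiset.card m * 2 ≤ m.sum := by
    simpa using Multiset.card_nsmul_le_sum h2
  have : Multiset.card m ≤ 2 := by omega
  interval_cases hm : Multiset.card m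
  · rw [Multiset.card_eq_zero] at hm
    subst hm
    simp at h3
  · obtain ⟨a, rfl⟩ := Multiset.card_eq_one.1 hm
    rw [Multiset.sum_singleton] at h3 h5
    interval_cases a <;> revert h6 <;> decide
  · obtain ⟨a, b, rfl⟩ := Multiset.card_eq_two.1 hm
    have ha := h2 a (by simp)
    have hb := h2 b (by simp)
    have hab : a + b ≤ 5 := by simpa using h5
    have : a ≤ 3 := by omega
    have : b ≤ 3 := by omega
    interval_cases a <;> interval_cases b <;> first | omega | (revert h6; decide)

lemma card_support_eq_two_of_symm {k : ℕ} (hk : 3 ≤ k) (hk4 : k ≠ 4)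
    {e : Option (Fin k) → Perm (Fin (k + 2))} (hinj : Function.Injective e)
    (hsym : ∀ π : Perm (Option (Fin k)), ∃ g, ∀ i, g * e i * g⁻¹ = e (π i)) (i : Option (Fin k)) :
    (e i).support.card = 2 := by
  have hnone : (e none).support.card = 2 := by
    by_contra hne
    have h1 := ne_one_of_symm (by omega) hinj hsym
    have h2 := two_le_card_support_of_ne_one h1
    have h3 : 3 ≤ (e none).support.card := by omega
    have hle := factorial_le_card_centralizer hinj hsym
    rcases Nat.lt_or_ge k 5 with h5 | h5
    · obtain rfl : k = 3 := by omega
      rcases card_centralizer_of_five (e none) h3 hle with h | h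
      · exact card_centralizer_ne_six hinj hsym h
      · exact card_centralizer_ne_eight hinj hsym h
    · have hs : (e none).support.card ≤ k + 2 := by simpa using (e none).support.card_le_univ
      have := factorial_mul_doubleFactorial_lt (k + 2 - (e none).support.card) _ h3 (by omega)
      rw [Nat.sub_add_cancel hs, Nat.add_sub_cancel] at this
      have := card_centralizer_le (e none)
      omega
  obtain ⟨g, hg⟩ := hsym (swap none i)
  rw [← swap_apply_left none i, ← hg none, card_support_conj, hnone]

/-! ### Families of transpositions -/

/-- At least four distinct pairwise intersecting two-element sets have a common point. -/
lemma exists_common_point {k : ℕ} (hk : 3 ≤ k) {α : Type*} [DecidableEq α]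
    (T : Option (Fin k) → Finset α) (hT : Function.Injective T) (h2 : ∀ i, (T i).card = 2)
    (hint : ∀ i j, i ≠ j → ¬ Disjoint (T i) (T j)) : ∃ p, ∀ i, p ∈ T i := by
  have h01 : (none : Option (Fin k)) ≠ some ⟨0, by omega⟩ := by simp
  generalize (none : Option (Fin k)) = i₀ at h01
  generalize (some ⟨0, by omega⟩ : Option (Fin k)) = i₁ at h01
  obtain ⟨p, hp0, hp1⟩ := Finset.not_disjoint_iff.1 (hint _ _ h01)
  obtain ⟨a, hpa, ha⟩ : ∃ a, p ≠ a ∧ T i₀ = {p, a} := by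
    obtain ⟨x, y, hxy, h⟩ := Finset.card_eq_two.1 (h2 i₀)
    grind [Finset.pair_comm]
  obtain ⟨b, hpb, hb⟩ : ∃ b, p ≠ b ∧ T i₁ = {p, b} := by
    obtain ⟨x, y, hxy, h⟩ := Finset.card_eq_two.1 (h2 i₁)
    grind [Finset.pair_comm]
  have hab : a ≠ b := by
    rintro rfl
    exact h01 (hT (ha.trans hb.symm))
  have key : ∀ i, p ∉ T i → T i = {a, b} := by
    intro i hi
    have hi0 : i ≠ i₀ := by grind
    have hi1 : i ≠ i₁ := by grind
    have hai : a ∈ T i := by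
      obtain ⟨x, hx, hx'⟩ := Finset.not_disjoint_iff.1 (hint _ _ hi0)
      grind
    have hbi : b ∈ T i := by
      obtain ⟨x, hx, hx'⟩ := Finset.not_disjoint_iff.1 (hint _ _ hi1)
      grind
    refine (Finset.eq_of_subset_of_card_le (by grind) ?_).symm
    rw [h2, Finset.card_pair hab]
  refine ⟨p, fun i => ?_⟩
  by_contra hi
  have hi0 : i ≠ i₀ := by grind
  have hi1 : i ≠ i₁ := by grind
  -- A fourth index, whose pair would have to meet the three sides of the triangle `p, a, b`.
  obtain ⟨l, hl⟩ : ∃ l, l ∉ ({i₀, i₁, i} : Finset (Option (Fin k))) := by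
    by_contra! h
    have h1 : ({i₀, i₁, i} : Finset (Option (Fin k))) = Finset.univ :=
      Finset.eq_univ_iff_forall.2 h
    have h3 := Finset.card_le_three (a := i₀) (b := i₁) (c := i)
    rw [h1, Finset.card_univ, Fintype.card_option, Fintype.card_fin] at h3
    omega
  simp only [Finset.mem_insert, Finset.mem_singleton, not_or] at hl
  have hpl : p ∈ T l := by
    by_contra h
    exact hl.2.2 (hT ((key l h).trans (key i hi).symm))
  obtain ⟨x, hx, hx'⟩ := Finset.not_disjoint_iff.1 (hint _ _ hl.2.2)
  rw [key i hi, Finset.mem_insert, Finset.mem_singleton] at hx'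
  rcases hx' with rfl | rfl
  · refine hl.1 (hT ?_)
    rw [ha]
    refine (Finset.eq_of_subset_of_card_le (by grind) ?_).symm
    rw [h2, Finset.card_pair hpa]
  · refine hl.2.1 (hT ?_)
    rw [hb]
    refine (Finset.eq_of_subset_of_card_le (by grind) ?_).symm
    rw [h2, Finset.card_pair hpb]

lemma not_disjoint_of_symm {k : ℕ} (hk : 3 ≤ k)
    {e : Option (Fin k) → Perm (Fin (k + 2))}
    (hsym : ∀ π : Perm (Option (Fin k)), ∃ g, ∀ i, g * e i * g⁻¹ = e (π i))
    (h2 : ∀ i, (e i).support.card = 2) (i j : Option (Fin k)) (hij : i ≠ j) :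
    ¬ Disjoint (e i).support (e j).support := by
  intro hd
  have hall : ∀ a b, a ≠ b → Disjoint (e a).support (e b).support := by
    intro a b hab
    -- `Option (Fin k)` has a permutation carrying `(i, j)` to `(a, b)`.
    obtain ⟨π, ha, hb⟩ : ∃ π : Perm (Option (Fin k)), π i = a ∧ π j = b := by
      have hne : swap i a j ≠ a := by
        intro h
        have := swap_apply_left i a
        exact hij ((swap i a).injective (this.trans h.symm))
      refine ⟨swap (swap i a j) b * swap i a, ?_, ?_⟩
      · rw [Perm.mul_apply, swap_apply_left, swap_apply_of_ne_of_ne hne.symm hab]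
      · rw [Perm.mul_apply, swap_apply_left]
    obtain ⟨g, hg⟩ := hsym π
    rw [← ha, ← hb, ← hg, ← hg, support_conj, support_conj]
    exact (Finset.disjoint_map _).2 hd
  have hcard : (Finset.univ.biUnion fun i => (e i).support).card = (k + 1) * 2 := by
    rw [Finset.card_biUnion fun a _ b _ hab => hall a b hab]
    simp [h2]
  have hle := (Finset.univ.biUnion fun i => (e i).support).card_le_univ
  rw [hcard, Fintype.card_fin] at hle
  omega

theorem totally_symmetric_max_conj_Xn (n : ℕ) (hn : 5 ≤ n) (hn6 : n ≠ 6)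
    (Y : Set (Equiv.Perm (Fin n))) (hY : IsTotallySymmetric Y) (hcard : Y.ncard = n - 1) :
    ∃ g : Equiv.Perm (Fin n),
      (fun x => g * x * g⁻¹) ''
        {σ : Equiv.Perm (Fin n) | ∃ i : Fin n, i ≠ ⟨0, by omega⟩ ∧ σ = Equiv.swap ⟨0, by omega⟩ i}
        = Y := by
  obtain ⟨k, rfl⟩ := Nat.exists_eq_add_of_le' (show 2 ≤ n by omega)
  have hYcard : Nat.card Y = Nat.card (Option (Fin k)) := by
    rw [Nat.card_coe_set_eq, hcard]; simp
  have hYfin : Finite Y := Set.toFinite Y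
  obtain ⟨E⟩ : Nonempty (Option (Fin k) ≃ Y) := (Finite.card_eq.1 hYcard.symm)
  set e : Option (Fin k) → Perm (Fin (k + 2)) := fun i => E i with he
  have hinj : Function.Injective e := Subtype.val_injective.comp E.injective
  have hsym : ∀ π : Perm (Option (Fin k)), ∃ g, ∀ i, g * e i * g⁻¹ = e (π i) := by
    intro π
    obtain ⟨g, hg⟩ := hY ((E.symm.trans π).trans E)
    refine ⟨g, fun i => ?_⟩
    simpa [he] using hg (E i)
  have h2 := card_support_eq_two_of_symm (by omega) (by omega) hinj hsym
  have hswap : ∀ i, (e i).IsSwap := fun i => card_support_eq_two.1 (h2 i)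
  have hsupp : Function.Injective fun i => (e i).support := by
    intro i j hij
    obtain ⟨a, b, hab, h⟩ := hswap i
    obtain ⟨c, d, hcd, h'⟩ := hswap j
    apply hinj
    simp only [h, h', support_swap hab, support_swap hcd] at hij ⊢
    have hc : c ∈ ({a, b} : Finset _) := by simp [hij]
    have hd : d ∈ ({a, b} : Finset _) := by simp [hij]
    rw [Finset.mem_insert, Finset.mem_singleton] at hc hd
    rcases hc with rfl | rfl <;> rcases hd with rfl | rfl
    · exact absurd rfl hcd
    · rfl
    · exact swap_comm _ _
    · exact absurd rfl hcd
  obtain ⟨p, hp⟩ := exists_common_point (by omega) _ hsupp h2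
    (not_disjoint_of_symm (by omega) hsym h2)
  refine ⟨swap ⟨0, by omega⟩ p, ?_⟩
  symm
  refine Set.eq_of_subset_of_ncard_le ?_ ?_ (Set.toFinite _)
  · intro y hy
    obtain ⟨i, hi⟩ := E.surjective ⟨y, hy⟩
    have hey : e i = y := congrArg Subtype.val hi
    obtain ⟨q, hq, hyq⟩ : ∃ q, p ≠ q ∧ y = swap p q := by
      obtain ⟨a, b, hab, h⟩ := hswap i
      have := hp i
      simp only [h, support_swap hab] at this
      rw [← hey, h]
      grind [swap_comm]
    set z : Fin (k + 2) := ⟨0, by omega⟩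
    refine ⟨swap z (swap z p q), ⟨swap z p q, ?_, rfl⟩, ?_⟩
    · intro h
      exact hq ((swap z p).injective ((swap_apply_right z p).trans h.symm))
    · change swap z p * swap z (swap z p q) * (swap z p)⁻¹ = y
      rw [← swap_apply_apply, swap_apply_left, ← Perm.mul_apply, swap_mul_self, hyq]
      rfl
  · rw [hcard]
    refine (Set.ncard_image_le (Set.toFinite _)).trans ?_
    have hset : {σ : Perm (Fin (k + 2)) | ∃ i : Fin (k + 2), i ≠ ⟨0, by omega⟩ ∧
        σ = swap ⟨0, by omega⟩ i} = swap ⟨0, by omega⟩ '' {⟨0, by omega⟩}ᶜ := by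
      ext σ
      simp [eq_comm]
    rw [hset]
    refine (Set.ncard_image_le (Set.toFinite _)).trans ?_
    rw [Set.ncard_compl]
    simp
end

section
/- Let Y ⊆ S_6 be a totally symmetric set of cardinality 5. Then there exists a group automorphism φ of S_6 such that φ(X_6) = Y; equivalently, Y is conjugate to X_6 or Y is conjugate to ρ(X_6) for a non-inner automorphism ρ of S_6. -/
open Equiv Equiv.Perm

/-- The 5-cycle `(1 2 3 4 5)`, fixing `0`. -/
def rot : Perm (Fin 6) :=
  ⟨![0, 2, 3, 4, 5, 1], ![0, 5, 1, 2, 3, 4], by decide, by decide⟩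

/-- The underlying functions of the involutions `pent j`, as a table. -/
def pentFun : Fin 6 → Fin 6 → Fin 6 :=
  ![![0, 1, 2, 3, 4, 5], ![1, 0, 5, 4, 3, 2], ![2, 3, 0, 1, 5, 4],
    ![3, 5, 4, 0, 2, 1], ![4, 2, 1, 5, 0, 3], ![5, 4, 3, 2, 1, 0]]

theorem pentFun_pentFun : ∀ j i, pentFun j (pentFun j i) = i := by decide +kernel

/-- For `j ≠ 0`, the fixed-point-free involution exchanging `0` with `j` and acting on
`{1, …, 5} = ℤ/5` by the reflection `a ↦ 2j - a` elsewhere. These five involutions are the images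
of the `swap 0 j` under the outer automorphism. The value at `j = 0` is the identity. -/
def pent (j : Fin 6) : Perm (Fin 6) :=
  ⟨pentFun j, pentFun j, pentFun_pentFun j, pentFun_pentFun j⟩

/-- The product of three disjoint transpositions which the outer automorphism assigns to
`swap a b`, which is `swap 0 a * swap 0 b * swap 0 a` if `a`, `b` are distinct and `b ≠ 0`
(the identity if `a = b`). -/
def syn (a b : Fin 6) : Perm (Fin 6) :=
  if a = b then 1 else if b = 0 then pent a else pent a * pent b * pent a

theorem syn_self (a : Fin 6) : syn a a = 1 := by simp [syn]

theorem syn_comm : ∀ a b, syn a b = syn b a := by decide +kernel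

/-- To verify that conjugation by a function of an unordered pair permutes the `syn i j` through
`q`, it suffices to treat increasing pairs. -/
theorem conj_syn_of_lt {p q : Fin 6 → Fin 6 → Perm (Fin 6)} (hp : ∀ a b, p a b = p b a)
    (hq : ∀ a b, q a b = q b a) (hp1 : ∀ a, p a a = 1) (hq1 : ∀ a, q a a = 1)
    (h : ∀ a b, a < b → ∀ i j, i < j → p a b * syn i j = syn (q a b i) (q a b j) * p a b)
    (a b i j : Fin 6) : p a b * syn i j * (p a b)⁻¹ = syn (q a b i) (q a b j) := by
  rw [mul_inv_eq_iff_eq_mul]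
  rcases eq_or_ne i j with rfl | hij
  · simp [syn_self]
  rcases eq_or_ne a b with rfl | hab
  · simp [hp1, hq1]
  rcases lt_or_gt_of_ne hab with hab | hab <;> rcases lt_or_gt_of_ne hij with hij | hij
  · exact h _ _ hab _ _ hij
  · rw [syn_comm i, syn_comm (q a b i)]; exact h _ _ hab _ _ hij
  · rw [hp a, hq a]; exact h _ _ hab _ _ hij
  · rw [hp a, hq a, syn_comm i, syn_comm (q b a i)]; exact h _ _ hab _ _ hij

theorem swap_conj_syn : ∀ a b i j,
    swap a b * syn i j * (swap a b)⁻¹ = syn (syn a b i) (syn a b j) :=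
  conj_syn_of_lt swap_comm syn_comm swap_self syn_self (by decide +kernel)

theorem syn_conj_syn : ∀ a b i j,
    syn a b * syn i j * (syn a b)⁻¹ = syn (swap a b i) (swap a b j) :=
  conj_syn_of_lt syn_comm swap_comm syn_self swap_self (by decide +kernel)

theorem syn_inj : ∀ a b c d, a ≠ b → syn a b = syn c d → (a = c ∧ b = d) ∨ (a = d ∧ b = c) := by
  decide +kernel

/-- A permutation of the six letters is determined by its action on the involutions `syn i j`. -/
theorem eq_of_syn_eq {p q : Perm (Fin 6)} (h : ∀ i j, syn (p i) (p j) = syn (q i) (q j)) :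
    p = q := by
  ext1 i
  obtain ⟨j, k, hij, hik, hjk⟩ : ∃ j k : Fin 6, i ≠ j ∧ i ≠ k ∧ j ≠ k := by
    revert i; decide
  have h1 := syn_inj _ _ _ _ (p.injective.ne hij) (h i j)
  have h2 := syn_inj _ _ _ _ (p.injective.ne hik) (h i k)
  have h3 := q.injective.ne hjk
  grind

/-- Conjugation permutes the involutions `syn i j` through a permutation of the indices. -/
theorem exists_dual (g : Perm (Fin 6)) :
    ∃ p : Perm (Fin 6), ∀ i j, g * syn i j * g⁻¹ = syn (p i) (p j) := by
  induction g using swap_induction_on with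
  | one => exact ⟨1, by simp⟩
  | swap_mul f x y _ ih =>
    obtain ⟨p, hp⟩ := ih
    refine ⟨syn x y * p, fun i j => ?_⟩
    rw [mul_apply, mul_apply, ← swap_conj_syn, ← hp]
    group

/-- The permutation of the indices of the `syn i j` induced by conjugation by `g`. -/
noncomputable def dual (g : Perm (Fin 6)) : Perm (Fin 6) := (exists_dual g).choose

theorem dual_spec (g : Perm (Fin 6)) (i j : Fin 6) :
    g * syn i j * g⁻¹ = syn (dual g i) (dual g j) := (exists_dual g).choose_spec i j

theorem dual_eq {g p : Perm (Fin 6)} (h : ∀ i j, g * syn i j * g⁻¹ = syn (p i) (p j)) :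
    dual g = p :=
  eq_of_syn_eq fun i j => by rw [← dual_spec, h]

/-- `dual` as a group homomorphism. -/
noncomputable def dualHom : Perm (Fin 6) →* Perm (Fin 6) :=
  MonoidHom.mk' dual fun g h => dual_eq fun i j => by
    rw [mul_apply, mul_apply, ← dual_spec, ← dual_spec]
    group

theorem dualHom_swap (a b : Fin 6) : dualHom (swap a b) = syn a b := dual_eq (swap_conj_syn a b)

theorem dualHom_syn (a b : Fin 6) : dualHom (syn a b) = swap a b := dual_eq (syn_conj_syn a b)

theorem dualHom_comp_self : dualHom.comp dualHom = MonoidHom.id _ := by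
  ext1 g
  induction g using swap_induction_on with
  | one => simp
  | swap_mul f x y _ ih => rw [map_mul, ih]; simp [dualHom_swap, dualHom_syn]

/-- The outer automorphism of `S_6` sending `swap a b` to `syn a b`; it is an involution. -/
noncomputable def outerAut : MulAut (Perm (Fin 6)) :=
  dualHom.toMulEquiv dualHom dualHom_comp_self dualHom_comp_self

theorem outerAut_swap (a b : Fin 6) : outerAut (swap a b) = syn a b := dualHom_swap a b

/-- Cycles of length 5 are the only elements of `S_6` whose order is divisible by 5. -/
theorem cycleType_of_five_dvd {g : Perm (Fin 6)} (h : 5 ∣ orderOf g) : g.cycleType = {5} := by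
  rw [← lcm_cycleType] at h
  have hsum : g.cycleType.sum ≤ 6 := by
    simpa [sum_cycleType] using Finset.card_le_univ g.support
  obtain ⟨n, hn, h5⟩ : ∃ n ∈ g.cycleType, 5 ∣ n := by
    by_contra! hc
    have : g.cycleType.lcm ∣ 12 := by
      refine Multiset.lcm_dvd.2 fun n hn => ?_
      have h1 := Multiset.le_sum_of_mem hn
      have h2 := two_le_of_mem_cycleType hn
      have h3 := hc n hn
      have h4 : n ≤ 6 := by omega
      interval_cases n <;> simp_all
    exact absurd (h.trans this) (by norm_num)
  obtain ⟨t, ht⟩ := Multiset.exists_cons_of_mem hn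
  have h2 := two_le_of_mem_cycleType hn
  rw [ht, Multiset.sum_cons] at hsum
  obtain rfl : n = 5 := by omega
  obtain rfl : t = 0 := by
    by_contra ht0
    obtain ⟨m, hm⟩ := Multiset.exists_mem_of_ne_zero ht0
    have h3 : 2 ≤ m := two_le_of_mem_cycleType (σ := g) (by simp [ht, hm])
    have h4 := Multiset.le_sum_of_mem hm
    omega
  simpa using ht

/-- Conjugation by `rot`, on functions. -/
def cj (y : Fin 6 → Fin 6) (i : Fin 6) : Fin 6 := rot (y (rot⁻¹ i))

/-- The number of letters on which two functions agree. -/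
def agree (u v : Fin 6 → Fin 6) : ℕ := (Finset.univ.filter fun i => u i = v i).card

theorem agree_conj (g u v : Perm (Fin 6)) :
    agree ⇑(g * u * g⁻¹) ⇑(g * v * g⁻¹) = agree u v :=
  Finset.card_equiv g⁻¹ fun i => by simp

/-- The assertion that, for `y` not commuting with `rot`, comparing the agreement numbers of a few
words in the conjugates of `y` by powers of `rot` singles out the ten functions `swap 0 i` and
`syn 0 i`. -/
def Listed (y : Fin 6 → Fin 6) : Prop :=
  agree y (cj y) = agree y (cj (cj y)) →
  agree (y ∘ cj y) (cj (cj y) ∘ y) = agree (y ∘ cj y) (cj (cj (cj y)) ∘ y) →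
  agree (y ∘ cj y) (cj y ∘ cj (cj (cj y))) = agree (y ∘ cj (cj (cj y))) (cj (cj (cj y)) ∘ cj y) →
  cj y = y ∨ (∃ i, i ≠ 0 ∧ y = swap 0 i) ∨ (∃ i, i ≠ 0 ∧ y = syn 0 i)

instance : DecidablePred Listed := fun y => by unfold Listed; infer_instance

-- Enumerating value tables instead of elements of `Perm (Fin 6)` keeps the evaluation of `y` cheap.
set_option synthInstance.maxSize 2000 in
set_option synthInstance.maxHeartbeats 200000 in
theorem listed_table : ∀ a b : Fin 6, a ≠ b → ∀ c, c ≠ a ∧ c ≠ b →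
    ∀ d, d ≠ a ∧ d ≠ b ∧ d ≠ c → ∀ e, e ≠ a ∧ e ≠ b ∧ e ≠ c ∧ e ≠ d →
    ∀ f, f ≠ a ∧ f ≠ b ∧ f ≠ c ∧ f ≠ d ∧ f ≠ e → Listed ![a, b, c, d, e, f] := by
  decide +kernel

theorem listed (y : Perm (Fin 6)) : Listed y := by
  have h := listed_table (y 0) (y 1) (by simp) (y 2) (by simp) (y 3) (by simp) (y 4) (by simp)
    (y 5) (by simp)
  rwa [show (y : Fin 6 → Fin 6) = ![y 0, y 1, y 2, y 3, y 4, y 5] from by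
    funext i; fin_cases i <;> rfl]

theorem rot_ne_zero : ∀ i, i ≠ 0 → rot i ≠ 0 := by decide

theorem rot_conj_swap : ∀ i, rot * swap 0 i * rot⁻¹ = swap 0 (rot i) := by decide +kernel

theorem rot_conj_syn : ∀ i, rot * syn 0 i * rot⁻¹ = syn 0 (rot i) := by decide +kernel

/-- A five-element family cycled by `rot` and containing one member of a `rot`-equivariant family
`f 1, …, f 5` is all of it. -/
theorem range_eq_of_apply_zero {y : Fin 5 → Perm (Fin 6)} (hinj : Function.Injective y)
    (hrot : ∀ i, rot * y i * rot⁻¹ = y (i + 1)) {f : Fin 6 → Perm (Fin 6)}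
    (hf : ∀ i, rot * f i * rot⁻¹ = f (rot i)) (h0 : ∃ i, i ≠ 0 ∧ y 0 = f i) :
    Set.range y = f '' {0}ᶜ := by
  have hstep : ∀ k, (∃ i, i ≠ 0 ∧ y k = f i) → ∃ i, i ≠ 0 ∧ y (k + 1) = f i := by
    rintro k ⟨i, hi, hk⟩
    exact ⟨rot i, rot_ne_zero i hi, by rw [← hrot, hk, hf]⟩
  have hall : ∀ k : Fin 5, ∃ i, i ≠ 0 ∧ y k = f i := by
    intro k
    induction k using Fin.induction with
    | zero => exact h0
    | succ k ih => simpa using hstep _ ih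
  apply Set.eq_of_subset_of_ncard_le
  · rintro _ ⟨k, rfl⟩
    obtain ⟨i, hi, hk⟩ := hall k
    exact ⟨i, hi, hk.symm⟩
  · rw [← Set.image_univ, Set.ncard_image_of_injective _ hinj]
    refine (Set.ncard_image_le).trans ?_
    rw [Set.ncard_compl]
    simp
  · exact Set.toFinite _

/-- The classification for totally symmetric families on which `rot` acts as a 5-cycle. -/
theorem range_eq_of_rot {y : Fin 5 → Perm (Fin 6)} (hinj : Function.Injective y)
    (hsym : ∀ σ : Perm (Fin 5), ∃ g, ∀ i, g * y i * g⁻¹ = y (σ i))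
    (hrot : ∀ i, rot * y i * rot⁻¹ = y (i + 1)) :
    Set.range y = swap 0 '' {0}ᶜ ∨ Set.range y = syn 0 '' {0}ᶜ := by
  have hagree : ∀ (σ : Perm (Fin 5)) (a b c d : Fin 5),
      agree ⇑(y a * y b) ⇑(y c * y d) =
        agree ⇑(y (σ a) * y (σ b)) ⇑(y (σ c) * y (σ d)) := by
    intro σ a b c d
    obtain ⟨g, hg⟩ := hsym σ
    rw [← agree_conj g, ← hg, ← hg, ← hg, ← hg]
    congr 2 <;> group
  have hagree' : ∀ (σ : Perm (Fin 5)) (a b : Fin 5),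
      agree (y a) (y b) = agree (y (σ a)) (y (σ b)) := by
    intro σ a b
    obtain ⟨g, hg⟩ := hsym σ
    rw [← agree_conj g, ← hg, ← hg]
  have hcj : ∀ k, cj (y k) = y (k + 1) := fun k => by rw [← hrot]; rfl
  have key := listed (y 0)
  simp only [Listed, hcj, ← coe_mul, DFunLike.coe_fn_eq] at key
  have key' := key (hagree' (swap 1 2) 0 1) (hagree (swap 2 3) 0 1 2 0) (hagree (swap 1 3) 0 1 1 3)
  exact (key'.resolve_left (hinj.ne (by decide))).imp
    (range_eq_of_apply_zero hinj hrot rot_conj_swap)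
    (range_eq_of_apply_zero hinj hrot rot_conj_syn)

open Fin.NatCast Fin.CommRing in
/-- An element realizing a cyclic shift of a five-element family is conjugate to `rot`. -/
theorem isConj_rot {y : Fin 5 → Perm (Fin 6)} (hinj : Function.Injective y) {g : Perm (Fin 6)}
    (hg : ∀ i, g * y i * g⁻¹ = y (i + 1)) : IsConj g rot := by
  have hpow : ∀ n : ℕ, g ^ n * y 0 * (g ^ n)⁻¹ = y (n : Fin 5) := by
    intro n
    induction n with
    | zero => simp
    | succ n ih =>
      rw [Nat.cast_succ, ← hg, ← ih, pow_succ']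
      group
  have h5 : 5 ∣ orderOf g := by
    have := hpow (orderOf g)
    rw [pow_orderOf_eq_one] at this
    have h0 := hinj (by simpa using this : y 0 = y (orderOf g : Fin 5))
    exact (Fin.natCast_eq_zero).1 h0.symm
  have hr : orderOf rot = 5 :=
    haveI : Fact (Nat.Prime 5) := ⟨by norm_num⟩
    orderOf_eq_prime (by decide +kernel) (by decide +kernel)
  rw [isConj_iff_cycleType_eq, cycleType_of_five_dvd h5, cycleType_of_five_dvd hr.symm.dvd]

theorem totally_symmetric_max_S6 (Y : Set (Equiv.Perm (Fin 6)))
    (hY : IsTotallySymmetric Y) (hcard : Y.ncard = 5) :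
    ∃ φ : MulAut (Equiv.Perm (Fin 6)),
      (φ : Equiv.Perm (Fin 6) → Equiv.Perm (Fin 6)) ''
        {σ : Equiv.Perm (Fin 6) | ∃ i : Fin 6, i ≠ 0 ∧ σ = Equiv.swap 0 i} = Y := by
  let e : Fin 5 ≃ Y := (Finite.equivFinOfCardEq (n := 5) hcard).symm
  have hsym : ∀ σ : Perm (Fin 5), ∃ g : Perm (Fin 6), ∀ i, g * e i * g⁻¹ = e (σ i) := by
    intro σ
    obtain ⟨g, hg⟩ := hY (e.permCongr σ)
    exact ⟨g, fun i => by simpa using hg (e i)⟩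
  obtain ⟨g, hg⟩ := hsym (Equiv.addRight 1)
  have hg' : ∀ i, g * e i * g⁻¹ = e (i + 1) := hg
  have heinj : Function.Injective fun i => (e i : Perm (Fin 6)) :=
    Subtype.val_injective.comp e.injective
  obtain ⟨h, hh⟩ := isConj_iff.1 (isConj_rot heinj hg')
  have hX : {σ : Perm (Fin 6) | ∃ i : Fin 6, i ≠ 0 ∧ σ = swap 0 i} = swap 0 '' {0}ᶜ := by
    ext σ; simp [eq_comm]
  -- Conjugating by `h` turns the cyclic shift of the family `e` into `rot`.
  let y : Fin 5 → Perm (Fin 6) := fun i => MulAut.conj h (e i)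
  have hYy : MulAut.conj h⁻¹ '' Set.range y = Y := by
    rw [← Set.range_comp]
    have : (MulAut.conj h⁻¹ : Perm (Fin 6) → Perm (Fin 6)) ∘ y = Subtype.val ∘ e := by
      funext i; simp [y, mul_assoc]
    rw [this, Set.range_comp]; simp
  have hr := range_eq_of_rot (y := y) ((MulAut.conj h).injective.comp heinj)
    (fun σ => by
      obtain ⟨k, hk⟩ := hsym σ
      refine ⟨h * k * h⁻¹, fun i => ?_⟩
      simp only [y, MulAut.conj_apply, ← hk]
      group)
    (fun i => by
      simp only [y, MulAut.conj_apply, ← hh, ← hg']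
      group)
  rw [hX]
  rcases hr with hr | hr
  · exact ⟨MulAut.conj h⁻¹, by rw [← hr, hYy]⟩
  · refine ⟨MulAut.conj h⁻¹ * outerAut, ?_⟩
    rw [MulAut.coe_mul, Set.image_comp, Set.image_image outerAut]
    simp only [outerAut_swap]
    exact hr ▸ hYy
end

section
/- Let Y ⊆ S_4 be a totally symmetric set of cardinality 3. Then Y is conjugate to X_4 = {(1 2), (1 3), (1 4)}, or Y is conjugate to {(1 2), (1 3), (2 3)}, or Y is equal to {(1 2)(3 4), (1 3)(2 4), (1 4)(2 3)}. -/
open Equiv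

/-- Any two elements of a totally symmetric set are swapped by a conjugation that fixes every
other element of the set. -/
theorem IsTotallySymmetric.exists_conj_swap {G : Type*} [Group G] {X : Set G}
    (hX : IsTotallySymmetric X) {x y : G} (hx : x ∈ X) (hy : y ∈ X) :
    ∃ g : G, g * x * g⁻¹ = y ∧ g * y * g⁻¹ = x ∧
      ∀ z ∈ X, z ≠ x → z ≠ y → g * z * g⁻¹ = z := by
  classical
  obtain ⟨g, hg⟩ := hX (Equiv.swap ⟨x, hx⟩ ⟨y, hy⟩)
  refine ⟨g, by simpa using hg ⟨x, hx⟩, by simpa using hg ⟨y, hy⟩, fun z hz hzx hzy => ?_⟩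
  have := hg ⟨z, hz⟩
  rwa [Equiv.swap_apply_of_ne_of_ne (by simpa using hzx) (by simpa using hzy)] at this

/-- Centralizers in `S₄` of elements other than involutions: for a 3-cycle every centralizing element
has order dividing 3, and the centralizer of a 4-cycle is generated by it. -/
theorem centralizer_cases : ∀ a g : Perm (Fin 4), g * a = a * g →
    a * a = 1 ∨ g * g * g = 1 ∨
      a * a * (a * a) = 1 ∧ (g = 1 ∨ g = a ∨ g = a⁻¹ ∨ g = a * a) := by
  decide +kernel

/-- For 4-cycles `a`, `b`: either `b = a` or `b = a⁻¹`, or `a²` conjugates `b` to `b⁻¹`. -/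
theorem four_cycle_conj : ∀ a : Perm (Fin 4), a * a ≠ 1 → a * a * (a * a) = 1 →
    ∀ b : Perm (Fin 4), b * b ≠ 1 → b * b * (b * b) = 1 →
      b = a ∨ b = a⁻¹ ∨ a * a * b * (a * a)⁻¹ = b⁻¹ := by
  decide +kernel

theorem involution_cases : ∀ a : Perm (Fin 4), a * a = 1 →
    a = 1 ∨ (∃ i j, i < j ∧ a = swap i j) ∨
      a = swap 0 1 * swap 2 3 ∨ a = swap 0 2 * swap 1 3 ∨ a = swap 0 3 * swap 1 2 := by
  decide +kernel

/-- Three distinct edges of `K₄`, of which all pairs or no pairs are disjoint, form a triangle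
(with vertices `p, q, r`) or a star (with centre `p`). -/
theorem star_or_triangle : ∀ i j : Fin 4, i < j → ∀ k l : Fin 4, k < l → swap i j ≠ swap k l →
    ∀ m n : Fin 4, m < n → swap i j ≠ swap m n → swap k l ≠ swap m n →
    (swap i j * swap k l = swap k l * swap i j ↔ swap i j * swap m n = swap m n * swap i j) →
    (swap i j * swap m n = swap m n * swap i j ↔ swap k l * swap m n = swap m n * swap k l) →
    ∃ p q : Fin 4, swap i j = swap p q ∧ p ≠ q ∧ ∃ r, p ≠ r ∧ q ≠ r ∧ swap k l = swap p r ∧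
      (swap m n = swap q r ∨ ∃ s, p ≠ s ∧ q ≠ s ∧ r ≠ s ∧ swap m n = swap p s) := by
  set_option synthInstance.maxHeartbeats 400000 in
  set_option synthInstance.maxSize 4096 in
  decide +kernel

theorem exists_perm_of_ne : ∀ p q : Fin 4, p ≠ q → ∀ r, p ≠ r → q ≠ r →
    ∃ σ : Perm (Fin 4), σ 0 = p ∧ σ 1 = q ∧ σ 2 = r := by
  decide +kernel

/-- An element of a totally symmetric triple in `S₄` is neither a 3-cycle nor a 4-cycle. -/
theorem mul_self_of_conj_swaps {a b c g h : Perm (Fin 4)} (hab : a ≠ b) (hbc : b ≠ c)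
    (h₁ : h * a * h⁻¹ = b) (h₂ : h * b * h⁻¹ = a) (h₃ : h * c * h⁻¹ = c)
    (g₁ : g * b * g⁻¹ = c) (g₂ : g * c * g⁻¹ = b) (g₃ : g * a * g⁻¹ = a) : a * a = 1 := by
  by_contra ha
  have hcb : c ≠ b⁻¹ := by
    rintro rfl
    apply hab
    rw [← h₂, ← inv_inj, ← h₃]
    group
  have hca : b ≠ a⁻¹ := by
    rintro rfl
    apply hbc
    rw [← g₁, ← inv_inj]
    nth_rw 1 [← g₃]
    group
  rcases centralizer_cases a g (mul_inv_eq_iff_eq_mul.mp g₃) with h0 | h0 | ⟨h4, h0⟩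
  · exact ha h0
  · -- Conjugation by `g³ = 1` takes `b` to `c`.
    apply hbc
    calc b = (g * g * g) * b * (g * g * g)⁻¹ := by rw [h0]; group
      _ = g * (g * (g * b * g⁻¹) * g⁻¹) * g⁻¹ := by group
      _ = c := by rw [g₁, g₂, g₁]
  · have hb2 : b * b ≠ 1 := by
      rw [← h₁, conj_mul, Ne, conj_eq_one_iff]
      exact ha
    have hb4 : b * b * (b * b) = 1 := by
      rw [← h₁, conj_mul, conj_mul, conj_eq_one_iff]
      exact h4
    rcases four_cycle_conj a ha h4 b hb2 hb4 with h5 | h5 | h5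
    · exact hab h5.symm
    · exact hca h5
    · -- Since `a² b a⁻² = b⁻¹ ≠ b`, conjugation by `a` does not have order two on `b`.
      have hb : b ≠ b⁻¹ := fun e => hb2 (by nth_rw 2 [e]; simp)
      rcases h0 with rfl | rfl | rfl | rfl
      · exact hbc (by simpa using g₁)
      · apply hb
        rw [← h5]
        nth_rw 1 [← g₂, ← g₁]
        group
      · apply hb
        rw [← h5]
        nth_rw 2 [← g₂]
        rw [← g₁]
        group
      · exact hcb (g₁.symm.trans h5)

theorem totally_symmetric_max_S4 (Y : Set (Equiv.Perm (Fin 4)))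
    (hY : IsTotallySymmetric Y) (hcard : Y.ncard = 3) :
    (∃ g : Equiv.Perm (Fin 4),
      (fun x => g * x * g⁻¹) ''
        ({Equiv.swap 0 1, Equiv.swap 0 2, Equiv.swap 0 3} : Set (Equiv.Perm (Fin 4))) = Y) ∨
    (∃ g : Equiv.Perm (Fin 4),
      (fun x => g * x * g⁻¹) ''
        ({Equiv.swap 0 1, Equiv.swap 0 2, Equiv.swap 1 2} : Set (Equiv.Perm (Fin 4))) = Y) ∨
    Y = ({Equiv.swap 0 1 * Equiv.swap 2 3, Equiv.swap 0 2 * Equiv.swap 1 3,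
          Equiv.swap 0 3 * Equiv.swap 1 2} : Set (Equiv.Perm (Fin 4))) := by
  obtain ⟨a, b, c, hab, hac, hbc, rfl⟩ := Set.ncard_eq_three.mp hcard
  obtain ⟨h, h₁, h₂, h₃⟩ := hY.exists_conj_swap (x := a) (y := b) (by simp) (by simp)
  obtain ⟨g, g₁, g₂, g₃⟩ := hY.exists_conj_swap (x := b) (y := c) (by simp) (by simp)
  replace h₃ := h₃ c (by simp) hac.symm hbc.symm
  replace g₃ := g₃ a (by simp) hab hac
  have ha2 : a * a = 1 := mul_self_of_conj_swaps hab hbc h₁ h₂ h₃ g₁ g₂ g₃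
  have hb2 : b * b = 1 := by rw [← h₁, conj_mul, ha2, mul_one, mul_inv_cancel]
  have hc2 : c * c = 1 := by rw [← g₁, conj_mul, hb2, mul_one, mul_inv_cancel]
  have ha1 : a ≠ 1 := by
    rintro rfl
    exact hab (by simpa using h₁)
  have hb1 : b ≠ 1 := by
    rintro rfl
    exact hbc (by simpa using g₁)
  have hc1 : c ≠ 1 := by
    rintro rfl
    exact hbc.symm (by simpa using g₂)
  have sb : Perm.sign b = Perm.sign a := by
    rw [← h₁, map_mul, map_mul, mul_right_comm, ← map_mul, mul_inv_cancel, map_one, one_mul]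
  have sc : Perm.sign c = Perm.sign a := by
    rw [← sb, ← g₁, map_mul, map_mul, mul_right_comm, ← map_mul, mul_inv_cancel, map_one, one_mul]
  by_cases hs : Perm.sign a = 1
  · right; right
    have key : ∀ x : Perm (Fin 4), x * x = 1 → x ≠ 1 → Perm.sign x = 1 →
        x = swap 0 1 * swap 2 3 ∨ x = swap 0 2 * swap 1 3 ∨ x = swap 0 3 * swap 1 2 := by
      intro x hx hx1 hxs
      rcases involution_cases x hx with e | ⟨i, j, hij, rfl⟩ | e
      · exact absurd e hx1
      · rw [Perm.sign_swap hij.ne] at hxs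
        exact absurd hxs (by decide)
      · exact e
    have ka := key a ha2 ha1 hs
    have kb := key b hb2 hb1 (sb.trans hs)
    have kc := key c hc2 hc1 (sc.trans hs)
    -- A three-element subset of a set with at most three elements is the whole set.
    refine Set.eq_of_subset_of_ncard_le ?_ ?_ (Set.toFinite _)
    · rintro x (rfl | rfl | rfl)
      · exact ka
      · exact kb
      · exact kc
    · rw [hcard]
      exact (Set.ncard_insert_le _ _).trans
        (Nat.succ_le_succ ((Set.ncard_insert_le _ _).trans (by simp)))
  · have key : ∀ x : Perm (Fin 4), x * x = 1 → x ≠ 1 → Perm.sign x ≠ 1 →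
        ∃ i j, i < j ∧ x = swap i j := by
      intro x hx hx1 hxs
      rcases involution_cases x hx with e | e | rfl | rfl | rfl
      · exact absurd e hx1
      · exact e
      all_goals exact absurd (by simp [Perm.sign_swap']) hxs
    obtain ⟨i, j, hij, ea⟩ := key a ha2 ha1 hs
    obtain ⟨k, l, hkl, eb⟩ := key b hb2 hb1 (by rwa [sb])
    obtain ⟨m, n, hmn, ec⟩ := key c hc2 hc1 (by rwa [sc])
    have c1 : Commute a b ↔ Commute a c := by
      have := Commute.conj_iff (a := a) (b := b) g
      rw [g₁, g₃] at this
      exact this.symm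
    have c2 : Commute a c ↔ Commute b c := by
      have := Commute.conj_iff (a := a) (b := c) h
      rw [h₁, h₃] at this
      exact this.symm
    have tri := star_or_triangle i j hij k l hkl (ea ▸ eb ▸ hab) m n hmn (ea ▸ ec ▸ hac)
      (eb ▸ ec ▸ hbc)
    rw [← ea, ← eb, ← ec] at tri
    obtain ⟨p, q, ea', hpq, r, hpr, hqr, eb', H⟩ := tri c1 c2
    obtain ⟨σ, rfl, rfl, rfl⟩ := exists_perm_of_ne p q hpq r hpr hqr
    rcases H with ec' | ⟨s, hps, hqs, hrs, ec'⟩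
    · refine Or.inr (Or.inl ⟨σ, ?_⟩)
      simp only [Set.image_insert_eq, Set.image_singleton, ← swap_apply_apply, ea', eb', ec']
    · refine Or.inl ⟨σ, ?_⟩
      obtain ⟨t, rfl⟩ := σ.surjective s
      have ht : t = 3 := by
        have h0 : (0 : Fin 4) ≠ t := fun e => hps (congrArg σ e)
        have h1 : (1 : Fin 4) ≠ t := fun e => hqs (congrArg σ e)
        have h2 : (2 : Fin 4) ≠ t := fun e => hrs (congrArg σ e)
        omega
      subst ht
      simp only [Set.image_insert_eq, Set.image_singleton, ← swap_apply_apply, ea', eb', ec']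
end

section
/- Every totally symmetric subset of the symmetric group S_3 has cardinality at most 3. -/
theorem totally_symmetric_S3_card_le_three (X : Set (Equiv.Perm (Fin 3)))
    (hX : IsTotallySymmetric X) : X.ncard ≤ 3 := by
  choose g hg using hX
  have hinj : Function.Injective g := by
    intro π σ h
    ext1 x
    apply Subtype.ext
    rw [← hg π x, ← hg σ x, h]
  have hcard := Nat.card_le_card_of_injective g hinj
  rw [Nat.card_perm, Nat.card_perm, Nat.card_coe_set_eq, Nat.card_fin] at hcard
  by_contra! hlt
  have hmono : Nat.factorial 4 ≤ Nat.factorial X.ncard := Nat.factorial_le hlt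
  exact absurd (hmono.trans hcard) (by decide)
end

section
/- (Collision implies collapse, G-set version.) Let G be a group, let Z₁ and Z₂ be G-sets, let Y ⊆ Z₁ be a finite totally symmetric set, and let f : Z₁ → Z₂ be a G-equivariant map. Then either |f(Y)| = |Y| or |f(Y)| = 1, and in either case f(Y) is a totally symmetric subset of Z₂. -/
/-!
If `f` is injective on `Y`, then `f '' Y` is a copy of `Y` and permutations transport along `f`
(`IsTotallySymmetricOn.image_of_injOn`). Otherwise two distinct points of `Y` have the same image,
and transpositions of `Y` spread this collision to all of `Y`
(`IsTotallySymmetricOn.eq_of_collision`), so that `f '' Y` is a singleton.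
-/

/-- A subset `Y` of a `G`-set `Z` is *totally symmetric* if every permutation of `Y`
can be realized by the action of some element of `G`. -/
def IsTotallySymmetricOn (G : Type*) [Group G] {Z : Type*} [MulAction G Z] (Y : Set Z) : Prop :=
  ∀ π : Y ≃ Y, ∃ g : G, ∀ y : Y, g • (y : Z) = ((π y : Y) : Z)

/-- A single collision `f a = f b` forces `f` to be constant on `Y`: for `c ≠ a`, an element of `G`
realizing the transposition of `b` and `c` fixes `a`, hence fixes `f a = f b` and sends it to
`f c`. -/
theorem IsTotallySymmetricOn.eq_of_collision {G Z₁ Z₂ : Type*} [Group G]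
    [MulAction G Z₁] [MulAction G Z₂] {Y : Set Z₁}
    (hY : IsTotallySymmetricOn G Y) {f : Z₁ → Z₂}
    (hf : ∀ (g : G) (z : Z₁), f (g • z) = g • f z) {a b : Y} (hab : a ≠ b)
    (h : f a = f b) (c : Y) : f c = f a := by
  classical
  by_cases hac : a = c
  · rw [hac]
  obtain ⟨g, hg⟩ := hY (Equiv.swap b c)
  have ha := hg a
  have hb := hg b
  rw [Equiv.swap_apply_of_ne_of_ne hab hac] at ha
  rw [Equiv.swap_apply_left] at hb
  rw [← hb, hf, ← h, ← hf, ha]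

/-- Where `f` is injective on `Y`, permutations of `f '' Y` pull back to permutations of `Y`. -/
theorem IsTotallySymmetricOn.image_of_injOn {G Z₁ Z₂ : Type*} [Group G]
    [MulAction G Z₁] [MulAction G Z₂] {Y : Set Z₁}
    (hY : IsTotallySymmetricOn G Y) {f : Z₁ → Z₂}
    (hf : ∀ (g : G) (z : Z₁), f (g • z) = g • f z) (hinj : Set.InjOn f Y) :
    IsTotallySymmetricOn G (f '' Y) := by
  intro π
  let e := Equiv.Set.imageOfInjOn f Y hinj
  have he (y : Y) : ((e y : f '' Y) : Z₂) = f y := rfl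
  obtain ⟨g, hg⟩ := hY ((e.trans π).trans e.symm)
  refine ⟨g, fun w => ?_⟩
  obtain ⟨y, rfl⟩ := e.surjective w
  rw [he, ← hf, hg, ← he]
  simp

theorem collision_implies_collapse {G Z₁ Z₂ : Type*} [Group G]
    [MulAction G Z₁] [MulAction G Z₂] (Y : Set Z₁) (hfin : Y.Finite)
    (hY : IsTotallySymmetricOn G Y) (f : Z₁ → Z₂)
    (hf : ∀ (g : G) (z : Z₁), f (g • z) = g • f z) :
    ((f '' Y).ncard = Y.ncard ∨ (f '' Y).ncard = 1) ∧ IsTotallySymmetricOn G (f '' Y) := by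
  by_cases hinj : Set.InjOn f Y
  · exact ⟨Or.inl (hinj.ncard_image), hY.image_of_injOn hf hinj⟩
  · simp only [Set.InjOn, not_forall] at hinj
    obtain ⟨a, ha, b, hb, h, hab⟩ := hinj
    have himg : f '' Y = {f a} := by
      refine Set.eq_singleton_iff_unique_mem.2 ⟨Set.mem_image_of_mem f ha, ?_⟩
      rintro _ ⟨c, hc, rfl⟩
      exact hY.eq_of_collision hf (a := ⟨a, ha⟩) (b := ⟨b, hb⟩)
        (fun e => hab (congrArg Subtype.val e)) h ⟨c, hc⟩
    rw [himg]
    -- The identity of `G` realizes the only permutation of a singleton.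
    exact ⟨Or.inr (Set.ncard_singleton _), fun π => ⟨1, fun y => by
      rw [one_smul, Subsingleton.elim (π y) y]⟩⟩
end

section
/- (Collision implies collapse, homomorphism version.) Let f : G → H be a group homomorphism and let X ⊆ G be a finite totally symmetric set. Then f(X) is a totally symmetric subset of H, and either |f(X)| = |X| or |f(X)| = 1. -/
/-- If `f` identifies two distinct points `a`, `b` of `X`, then it identifies `a` with every
`c ∈ X`: for `c ≠ a`, the conjugation realizing the transposition `(b c)` fixes `a` and sends `b` to `c`,
so applying `f` turns `f a = f b` into `f a = f c`. -/
lemma IsTotallySymmetric.map_eq_of_collision {G H : Type*} [Group G] [Group H]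
    (f : G →* H) {X : Set G} (hX : IsTotallySymmetric X) {a b c : G}
    (ha : a ∈ X) (hb : b ∈ X) (hc : c ∈ X) (hab : a ≠ b) (hf : f a = f b) :
    f c = f a := by
  classical
  by_cases hca : c = a
  · rw [hca]
  obtain ⟨g, hg⟩ := hX (Equiv.swap ⟨b, hb⟩ ⟨c, hc⟩)
  have h1 := hg ⟨a, ha⟩
  have h2 := hg ⟨b, hb⟩
  rw [Equiv.swap_apply_of_ne_of_ne (by simpa using hab) (by simpa using Ne.symm hca)] at h1
  rw [Equiv.swap_apply_left] at h2
  simp only at h1 h2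
  calc f c = f g * f b * (f g)⁻¹ := by rw [← h2]; simp
    _ = f (g * a * g⁻¹) := by rw [← hf]; simp
    _ = f a := by rw [h1]

/-- When `f` is injective on `X`, a permutation of `f '' X` lifts to one of `X`, and the image
of a conjugator for the lift realizes the original permutation. -/
lemma IsTotallySymmetric.image_of_injOn {G H : Type*} [Group G] [Group H]
    (f : G →* H) {X : Set G} (hX : IsTotallySymmetric X) (hf : Set.InjOn f X) :
    IsTotallySymmetric (f '' X) := by
  intro π
  let e : X ≃ f '' X := Equiv.Set.imageOfInjOn f X hf
  obtain ⟨g, hg⟩ := hX ((e.trans π).trans e.symm)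
  refine ⟨f g, fun y => ?_⟩
  obtain ⟨x, rfl⟩ := e.surjective y
  have he : ∀ z : X, ((e z : f '' X) : H) = f z := fun _ => rfl
  have h := congrArg f (hg x)
  rw [← he (((e.trans π).trans e.symm) x)] at h
  simpa [he] using h

theorem collision_implies_collapse_hom {G H : Type*} [Group G] [Group H]
    (f : G →* H) (X : Set G) (hfin : X.Finite) (hX : IsTotallySymmetric X) :
    IsTotallySymmetric (⇑f '' X) ∧ ((⇑f '' X).ncard = X.ncard ∨ (⇑f '' X).ncard = 1) := by
  by_cases hf : Set.InjOn f X
  · exact ⟨hX.image_of_injOn f hf, Or.inl (hf.ncard_image)⟩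
  · obtain ⟨a, ha, b, hb, hfab, hab⟩ : ∃ a ∈ X, ∃ b ∈ X, f a = f b ∧ a ≠ b := by
      simpa [Set.InjOn] using hf
    have himg : f '' X = {f a} := by
      ext y
      constructor
      · rintro ⟨c, hc, rfl⟩
        exact hX.map_eq_of_collision f ha hb hc hab hfab
      · rintro rfl
        exact ⟨a, ha, rfl⟩
    rw [himg]
    refine ⟨fun π => ⟨1, fun x => ?_⟩, Or.inr (Set.ncard_singleton _)⟩
    simp [Subsingleton.elim (π x) x]
end

section
/- Let n > m > 2 with (n, m) ≠ (4, 3), and let f : S_n → S_m be a group homomorphism. Then the image of f is cyclic. -/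
/-!
Since `m! < n!`, the kernel of `f` is nontrivial. The hypotheses force `5 ≤ n`, so this nontrivial
normal subgroup of `S_n` contains the alternating group (`Equiv.Perm.alternatingGroup_le_of_normal`).
Hence `f` kills every even permutation and takes the same value on all odd ones, and its image is
generated by the image of a single transposition.
-/

theorem hom_to_smaller_symm_group_cyclic (n m : ℕ) (hm : 2 < m) (hmn : m < n)
    (h43 : (n, m) ≠ (4, 3)) (f : Equiv.Perm (Fin n) →* Equiv.Perm (Fin m)) :
    IsCyclic f.range := by
  have h5 : 5 ≤ n := by
    by_contra h
    exact h43 (by rw [Prod.mk.injEq]; omega)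
  have hnt : f.ker ≠ ⊥ := by
    intro h
    have hcard := Fintype.card_le_of_injective f ((MonoidHom.ker_eq_bot_iff f).1 h)
    simp only [Fintype.card_perm, Fintype.card_fin] at hcard
    exact absurd hcard (not_le.2 ((Nat.factorial_lt (by omega)).2 hmn))
  have hA : alternatingGroup (Fin n) ≤ f.ker :=
    Equiv.Perm.alternatingGroup_le_of_normal (by simpa using h5)
      ((Subgroup.nontrivial_iff_ne_bot _).2 hnt)
  let s : Equiv.Perm (Fin n) := Equiv.swap ⟨0, by omega⟩ ⟨1, by omega⟩
  have hs : Equiv.Perm.sign s = -1 := Equiv.Perm.sign_swap (by simp)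
  refine ⟨⟨f s, s, rfl⟩, ?_⟩
  rintro ⟨_, g, rfl⟩
  rcases Int.units_eq_one_or (Equiv.Perm.sign g) with hg | hg
  · have h1 : f g = 1 := hA (Equiv.Perm.mem_alternatingGroup.2 hg)
    exact ⟨0, Subtype.ext (by simp [h1])⟩
  · have h1 : f (s⁻¹ * g) = 1 := hA (Equiv.Perm.mem_alternatingGroup.2 (by simp [hs, hg]))
    rw [map_mul, map_inv, inv_mul_eq_one] at h1
    exact ⟨1, Subtype.ext (by simp [h1])⟩
end

section
/- Let n > 2 with n ∉ {4, 6}, and let f : S_n → S_n be a group homomorphism whose image is not cyclic. Then f is an inner automorphism: there exists σ ∈ S_n such that f(x) = σ x σ⁻¹ for all x ∈ S_n. -/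
/-!
Since `A_n` is simple (`n = 3` or `n ≥ 5`), a normal subgroup of `S_n` that meets `A_n` trivially
is central, hence trivial. So `f` is either injective or kills `A_n`; in the latter case it
factors through the sign and its image is cyclic. Thus `f` is an automorphism.

An automorphism maps transpositions to transpositions (`isSwap_of_pow_six`). Indeed, the product of
two transpositions has order dividing `6`, so the image `t` of a transposition satisfies
`(t * (g * t * g⁻¹)) ^ 6 = 1` for all `g`. If the involution `t` has two 2-cycles and a fixed
point, conjugating by a suitable `g` yields a 5-cycle as such a product; if it has at least four
2-cycles one obtains an element with a 4-cycle. Both violate the identity, and the only other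
involutions that are not transpositions are the fixed-point-free ones in `S_4` and `S_6`.

Finally an automorphism preserving transpositions is inner (`inner_of_isSwap`): the images of the
transpositions `(o j)` all move a common point `p`, since otherwise three of them would form a
triangle, which injectivity forbids. The map `j ↦ f (o j) p` is the conjugating permutation.
-/

open Equiv Equiv.Perm

lemma isSwap_eq_swap_apply {α : Type*} [DecidableEq α] {u : Perm α} (hu : u.IsSwap) {p : α}
    (hp : u p ≠ p) : u = swap p (u p) := by
  obtain ⟨x, y, hxy, rfl⟩ := hu
  by_cases h1 : p = x
  · subst h1; simp
  by_cases h2 : p = y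
  · subst h2; simp [swap_comm]
  exact absurd (swap_apply_of_ne_of_ne h1 h2) hp

lemma swap_mul_swap_pow_six {α : Type*} [Fintype α] [DecidableEq α] {s s' : Perm α} (h : s.IsSwap)
    (h' : s'.IsSwap) : (s * s') ^ 6 = 1 := by
  have hs : s * s = 1 := by obtain ⟨x, y, hxy, rfl⟩ := h; exact swap_mul_self x y
  have hs' : s' * s' = 1 := by obtain ⟨x, y, hxy, rfl⟩ := h'; exact swap_mul_self x y
  by_cases hd : Perm.Disjoint s s'
  · rw [hd.commute.mul_pow, show (6 : ℕ) = 2 * 3 from rfl, pow_mul, pow_mul, sq, sq, hs, hs']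
    simp
  · simp only [Perm.Disjoint, not_forall, not_or] at hd
    obtain ⟨x, h1, h2⟩ := hd
    rw [isSwap_eq_swap_apply h h1, isSwap_eq_swap_apply h' h2]
    by_cases hyz : s x = s' x
    · rw [hyz, swap_mul_self, one_pow]
    · have h3 := isThreeCycle_swap_mul_swap_same (Ne.symm h1) (Ne.symm h2) hyz
      rw [show (6 : ℕ) = 3 * 2 from rfl, pow_mul, ← h3.orderOf, pow_orderOf_eq_one, one_pow]

/-- With two 2-cycles `(a b)`, `(c d)` and a fixed point `e`, conjugating by the 5-cycle
`a → b → c → d → e → a` gives a product which cycles `a → b → d → e → c → a`. -/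
lemma false_of_fixed {α : Type*} [DecidableEq α] {t : Perm α}
    (h : ∀ g : Perm α, (t * (g * t * g⁻¹)) ^ 6 = 1) {a b c d e : α}
    (hab : t a = b) (hba : t b = a) (hcd : t c = d) (hdc : t d = c) (he : t e = e)
    (hl : [a, b, c, d, e].Nodup) : False := by
  set g := List.formPerm [a, b, c, d, e] with hg
  have ga : g a = b := List.formPerm_apply_getElem _ hl 0 (by simp)
  have gb : g b = c := List.formPerm_apply_getElem _ hl 1 (by simp)
  have gc : g c = d := List.formPerm_apply_getElem _ hl 2 (by simp)
  have gd : g d = e := List.formPerm_apply_getElem _ hl 3 (by simp)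
  have ge : g e = a := List.formPerm_apply_getLast a [b, c, d, e]
  have ia : g⁻¹ a = e := by rw [inv_eq_iff_eq, ge]
  have ib : g⁻¹ b = a := by rw [inv_eq_iff_eq, ga]
  have ic : g⁻¹ c = b := by rw [inv_eq_iff_eq, gb]
  have id' : g⁻¹ d = c := by rw [inv_eq_iff_eq, gc]
  have ie : g⁻¹ e = d := by rw [inv_eq_iff_eq, gd]
  have := congrArg (fun u : Perm α => u a) (h g)
  simp only [pow_succ, pow_zero, one_mul, Perm.mul_apply, Perm.one_apply, ia, ib, ic, id', ie,
    hab, hba, hcd, hdc, he, ga, gb, gc, gd, ge] at this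
  simp [this] at hl

/-- With four 2-cycles `(a₁ a₂)`, …, `(a₇ a₈)`, conjugating by the 8-cycle `a₁ → … → a₈ → a₁`
gives a product which cycles `a₁ → a₇ → a₅ → a₃ → a₁`. -/
lemma false_of_four {α : Type*} [DecidableEq α] {t : Perm α}
    (h : ∀ g : Perm α, (t * (g * t * g⁻¹)) ^ 6 = 1) {a₁ a₂ a₃ a₄ a₅ a₆ a₇ a₈ : α}
    (h1 : t a₁ = a₂) (h2 : t a₂ = a₁) (h3 : t a₃ = a₄) (h4 : t a₄ = a₃)
    (h5 : t a₅ = a₆) (h6 : t a₆ = a₅) (h7 : t a₇ = a₈) (h8 : t a₈ = a₇)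
    (hl : [a₁, a₂, a₃, a₄, a₅, a₆, a₇, a₈].Nodup) : False := by
  set g := List.formPerm [a₁, a₂, a₃, a₄, a₅, a₆, a₇, a₈] with hg
  have g1 : g a₁ = a₂ := List.formPerm_apply_getElem _ hl 0 (by simp)
  have g2 : g a₂ = a₃ := List.formPerm_apply_getElem _ hl 1 (by simp)
  have g3 : g a₃ = a₄ := List.formPerm_apply_getElem _ hl 2 (by simp)
  have g4 : g a₄ = a₅ := List.formPerm_apply_getElem _ hl 3 (by simp)
  have g5 : g a₅ = a₆ := List.formPerm_apply_getElem _ hl 4 (by simp)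
  have g6 : g a₆ = a₇ := List.formPerm_apply_getElem _ hl 5 (by simp)
  have g7 : g a₇ = a₈ := List.formPerm_apply_getElem _ hl 6 (by simp)
  have g8 : g a₈ = a₁ := List.formPerm_apply_getLast a₁ [a₂, a₃, a₄, a₅, a₆, a₇, a₈]
  have i1 : g⁻¹ a₁ = a₈ := by rw [inv_eq_iff_eq, g8]
  have i3 : g⁻¹ a₃ = a₂ := by rw [inv_eq_iff_eq, g2]
  have i5 : g⁻¹ a₅ = a₄ := by rw [inv_eq_iff_eq, g4]
  have i7 : g⁻¹ a₇ = a₆ := by rw [inv_eq_iff_eq, g6]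
  have := congrArg (fun u : Perm α => u a₁) (h g)
  simp only [pow_succ, pow_zero, one_mul, Perm.mul_apply, Perm.one_apply, i1, i3, i5, i7,
    h2, h4, h6, h8, g1, g3, g5, g7] at this
  simp [this] at hl

/-- The involutions `t` all of whose products `t * (g * t * g⁻¹)` have order dividing `6` are the
transpositions, except that in `S_4` and `S_6` fixed-point-free ones also qualify. -/
lemma isSwap_of_pow_six {n : ℕ} (h4 : n ≠ 4) (h6 : n ≠ 6) {t : Perm (Fin n)} (ht : t ≠ 1)
    (htt : t * t = 1) (h : ∀ g : Perm (Fin n), (t * (g * t * g⁻¹)) ^ 6 = 1) : t.IsSwap := by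
  have tt : ∀ x, t (t x) = x := fun x => by rw [← Perm.mul_apply, htt, Perm.one_apply]
  have inj : ∀ {x y}, t x = t y → x = y := fun h => t.injective h
  obtain ⟨a, ha⟩ : ∃ a, t a ≠ a := by
    by_contra! hc; exact ht (Equiv.ext hc)
  by_cases hs : t = swap a (t a)
  · exact ⟨a, t a, ha.symm, hs⟩
  exfalso
  obtain ⟨c, hc, hca, hcb⟩ : ∃ c, t c ≠ c ∧ c ≠ a ∧ c ≠ t a := by
    by_contra! hc
    refine hs (Equiv.ext fun x => ?_)
    by_cases h1 : x = a
    · subst h1; simp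
    by_cases h2 : x = t a
    · subst h2; simp [tt]
    rw [swap_apply_of_ne_of_ne h1 h2]
    by_contra h3
    exact h2 (hc x h3 h1)
  have hfree : ∀ e, t e ≠ e := by
    intro e he
    refine false_of_fixed h rfl (tt a) rfl (tt c) he ?_
    simp only [List.nodup_cons, List.mem_cons, List.not_mem_nil, or_false, not_or,
      not_false_eq_true, List.nodup_nil, and_true]
    grind
  have miss : ∀ l : List (Fin n), l.Nodup → l.length ≠ n → ∃ x, x ∉ l := by
    intro l hl hln
    by_contra! hx
    rw [← List.toFinset_card_of_nodup hl,
      Finset.eq_univ_of_forall (s := l.toFinset) (by simpa using hx)] at hln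
    simp at hln
  obtain ⟨e, he⟩ := miss [a, t a, c, t c] (by
    simp only [List.nodup_cons, List.mem_cons, List.not_mem_nil, or_false, not_or,
      not_false_eq_true, List.nodup_nil, and_true]
    grind) h4.symm
  simp only [List.mem_cons, List.not_mem_nil, or_false, not_or] at he
  have := hfree e
  obtain ⟨k, hk⟩ := miss [a, t a, c, t c, e, t e] (by
    simp only [List.nodup_cons, List.mem_cons, List.not_mem_nil, or_false, not_or,
      not_false_eq_true, List.nodup_nil, and_true]
    grind) h6.symm
  simp only [List.mem_cons, List.not_mem_nil, or_false, not_or] at hk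
  have := hfree k
  refine false_of_four h rfl (tt a) rfl (tt c) rfl (tt e) rfl (tt k) ?_
  simp only [List.nodup_cons, List.mem_cons, List.not_mem_nil, or_false, not_or,
      not_false_eq_true, List.nodup_nil, and_true]
  grind

lemma swap_not_commute {α : Type*} [DecidableEq α] {o i j : α} (hi : i ≠ o) (hj : j ≠ o)
    (hij : i ≠ j) : ¬ Commute (swap o i) (swap o j) := by
  intro h
  have := congrArg (fun u : Perm α => u o) h.eq
  simp only [Perm.mul_apply, swap_apply_left] at this
  rw [swap_apply_of_ne_of_ne hj hij.symm, swap_apply_of_ne_of_ne hi hij] at this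
  exact hij this.symm

/-- The star transpositions `(o j)` generate the symmetric group. -/
lemma hom_ext_star {α G : Type*} [Finite α] [DecidableEq α] [Group G] {f g : Perm α →* G} (o : α)
    (h : ∀ j, f (swap o j) = g (swap o j)) : f = g := by
  refine MonoidHom.eq_of_eqOn_dense (closure_isSwap (α := α)) ?_
  rintro _ ⟨i, j, hij, rfl⟩
  by_cases hi : o = i
  · subst hi; exact h j
  by_cases hj : o = j
  · subst hj; rw [swap_comm]; exact h i
  rw [swap_comm i j, ← swap_mul_swap_mul_swap (x := i) (y := o) (z := j)]
  · simp only [map_mul, swap_comm i o, h]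
  all_goals grind

lemma inner_of_isSwap {α : Type*} [Finite α] [DecidableEq α] {f : Perm α →* Perm α}
    (hf : Function.Injective f) (hsw : ∀ s, s.IsSwap → (f s).IsSwap) {o i j : α} (hi : i ≠ o)
    (hj : j ≠ o) (hij : i ≠ j) : ∃ σ : Perm α, ∀ x, f x = σ * x * σ⁻¹ := by
  have hsw' : ∀ k, k ≠ o → (f (swap o k)).IsSwap := fun k hk => hsw _ ⟨o, k, hk.symm, rfl⟩
  have key : ∀ k l, k ≠ o → l ≠ o → k ≠ l → ¬ Commute (f (swap o k)) (f (swap o l)) :=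
    fun k l hk hl hkl hc => swap_not_commute hk hl hkl (hf (by simpa using hc.eq))
  obtain ⟨p, hp1, hp2⟩ : ∃ p, f (swap o i) p ≠ p ∧ f (swap o j) p ≠ p := by
    by_contra! hc
    exact key i j hi hj hij
      (Perm.Disjoint.commute fun x => or_iff_not_imp_left.mpr fun hx => hc x hx)
  have e1 := isSwap_eq_swap_apply (hsw' i hi) hp1
  have e2 := isSwap_eq_swap_apply (hsw' j hj) hp2
  have hqr : f (swap o i) p ≠ f (swap o j) p := by
    intro h
    refine key i j hi hj hij ?_
    rw [e1, e2, h]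
  have hstar : ∀ k, k ≠ o → f (swap o k) p ≠ p := by
    intro k hk hfix
    have hki : k ≠ i := by rintro rfl; exact hp1 hfix
    have hkj : k ≠ j := by rintro rfl; exact hp2 hfix
    -- A permutation fixing `p` and `q` commutes with `swap p q`.
    have move : ∀ l, l ≠ o → k ≠ l → f (swap o l) p ≠ p →
        f (swap o k) (f (swap o l) p) ≠ f (swap o l) p := by
      intro l hl hkl hlp hfix'
      refine key k l hk hl hkl ?_
      rw [isSwap_eq_swap_apply (hsw' l hl) hlp]
      show _ * _ = _ * _
      rw [mul_swap_eq_swap_mul, hfix, hfix']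
    have hq := move i hi hki hp1
    have hr := move j hj hkj hp2
    have e3 := isSwap_eq_swap_apply (hsw' k hk) hq
    have e4 : f (swap o k) (f (swap o i) p) = f (swap o j) p := by
      by_contra hne
      rw [e3] at hr
      exact hr (swap_apply_of_ne_of_ne hqr.symm (Ne.symm hne))
    -- Here `f (o k)` would close the triangle, and so coincide with `f (i j)`.
    have e5 : f (swap o k) = f (swap i j) := by
      rw [e3, e4, ← swap_mul_swap_mul_swap (x := j) (y := o) (z := i) hj (by grind),
        map_mul, map_mul, swap_comm j o, e1, e2]
      simp only [swap_apply_left]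
      rw [swap_comm p (f (swap o j) p), swap_mul_swap_mul_swap hp2 (by grind)]
    have := congrArg (fun u : Perm α => u o) (hf e5)
    simp only [swap_apply_left, swap_apply_of_ne_of_ne hi.symm hj.symm] at this
    exact hk this
  have himg : ∀ k, f (swap o k) = swap p (f (swap o k) p) := by
    intro k
    by_cases hk : k = o
    · subst hk; simp [← Perm.one_def]
    · exact isSwap_eq_swap_apply (hsw' k hk) (hstar k hk)
  have hinj : Function.Injective fun k => f (swap o k) p := by
    intro k l hkl
    have h1 : f (swap o k) = f (swap o l) := by
      rw [himg k, himg l]; exact congrArg _ hkl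
    simpa using congrArg (fun u : Perm α => u o) (hf h1)
  let σ : Perm α := Equiv.ofBijective _ (Finite.injective_iff_bijective.mp hinj)
  have hσ : ∀ k, σ k = f (swap o k) p := fun k => rfl
  have hσo : σ o = p := by rw [hσ]; simp [← Perm.one_def]
  have : f = (MulAut.conj σ).toMonoidHom := by
    refine hom_ext_star o fun k => ?_
    rw [himg k, ← hσ k, ← hσo]
    simp [mul_swap_eq_swap_mul]
  exact ⟨σ, fun x => by rw [this]; simp⟩

lemma injective_of_not_isCyclic {n : ℕ} (hn : 2 < n) (h4 : n ≠ 4)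
    (f : Perm (Fin n) →* Perm (Fin n)) (hnc : ¬ IsCyclic f.range) : Function.Injective f := by
  have hsimple : IsSimpleGroup (alternatingGroup (Fin n)) := by
    rcases Nat.lt_or_ge n 5 with h | h
    · obtain rfl : n = 3 := by omega
      have : Fact (Nat.Prime 3) := ⟨Nat.prime_three⟩
      refine isSimpleGroup_of_prime_card (p := 3) ?_
      have := two_mul_nat_card_alternatingGroup (α := Fin 3)
      rw [Nat.card_perm, Nat.card_fin, show Nat.factorial 3 = 6 from rfl] at this
      omega
    · exact alternatingGroup.isSimpleGroup (by simpa using h)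
  rw [← MonoidHom.ker_eq_bot_iff]
  rcases hsimple.eq_bot_or_eq_top_of_normal
    (f.ker.subgroupOf (alternatingGroup (Fin n))) inferInstance with hb | ht
  · rw [Subgroup.subgroupOf_eq_bot] at hb
    rw [eq_bot_iff]
    intro x hx
    have hc' : x ∈ Subgroup.center (Perm (Fin n)) := by
      rw [Subgroup.mem_center_iff]
      intro y
      have h1 : y * x * y⁻¹ * x⁻¹ ∈ f.ker := by
        rw [MonoidHom.mem_ker] at hx ⊢; simp [hx]
      have h2 : y * x * y⁻¹ * x⁻¹ ∈ alternatingGroup (Fin n) := by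
        rw [mem_alternatingGroup]; 
        rw [map_mul, map_mul, map_mul, map_inv, map_inv, mul_inv_cancel_comm, mul_inv_cancel]
      have := Subgroup.disjoint_def.mp hb h1 h2
      rwa [mul_inv_eq_one, mul_inv_eq_iff_eq_mul] at this
    by_contra hx1
    obtain ⟨a, ha⟩ : ∃ a, x a ≠ a := by
      by_contra! h; exact hx1 (Equiv.ext h)
    obtain ⟨c, hc⟩ : ∃ c, c ∉ ({a, x a} : Finset (Fin n)) := by
      by_contra! h
      have h2 := Finset.card_le_two (a := a) (b := x a)
      rw [Finset.eq_univ_of_forall h, Finset.card_univ, Fintype.card_fin] at h2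
      omega
    simp only [Finset.mem_insert, Finset.mem_singleton, not_or] at hc
    have := congrArg (fun u : Perm (Fin n) => u a)
      (Subgroup.mem_center_iff.mp hc' (swap (x a) c))
    simp only [Perm.mul_apply, swap_apply_left] at this
    rw [swap_apply_of_ne_of_ne ha.symm (Ne.symm hc.1)] at this
    exact hc.2 this
  · exfalso
    rw [Subgroup.subgroupOf_eq_top] at ht
    apply hnc
    let o : Fin n := ⟨0, by omega⟩
    let i : Fin n := ⟨1, by omega⟩
    have hoi : o ≠ i := by simp [o, i]
    -- The image consists of `1` and `f (o i)`.
    refine ⟨⟨f (swap o i), swap o i, rfl⟩, ?_⟩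
    rintro ⟨_, x, rfl⟩
    rcases Int.units_eq_one_or (sign x) with hx | hx
    · have : f x = 1 := ht (mem_alternatingGroup.mpr hx)
      exact ⟨0, by ext1; simp [this]⟩
    · have : f (x * (swap o i)⁻¹) = 1 :=
        ht (mem_alternatingGroup.mpr (by rw [map_mul, map_inv, hx, sign_swap hoi]; simp))
      rw [map_mul, map_inv, mul_inv_eq_one] at this
      exact ⟨1, by ext1; simp [this]⟩

theorem noncyclic_endo_is_inner (n : ℕ) (hn : 2 < n) (h4 : n ≠ 4) (h6 : n ≠ 6)
    (f : Equiv.Perm (Fin n) →* Equiv.Perm (Fin n)) (hnc : ¬ IsCyclic f.range) :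
    ∃ σ : Equiv.Perm (Fin n), ∀ x : Equiv.Perm (Fin n), f x = σ * x * σ⁻¹ := by
  have hinj := injective_of_not_isCyclic hn h4 f hnc
  have hsurj : Function.Surjective f := Finite.injective_iff_surjective.mp hinj
  refine inner_of_isSwap hinj (fun s hs => ?_) (o := ⟨0, by omega⟩) (i := ⟨1, by omega⟩)
    (j := ⟨2, by omega⟩) (by simp) (by simp) (by simp)
  have hss : s * s = 1 := by obtain ⟨x, y, hxy, rfl⟩ := hs; exact swap_mul_self x y
  refine isSwap_of_pow_six h4 h6 (fun h1 => ?_) (by rw [← map_mul, hss, map_one]) fun g => ?_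
  · obtain rfl := (map_eq_one_iff f hinj).mp h1
    obtain ⟨x, y, hxy, h⟩ := hs
    exact hxy (by simpa using congrArg (fun u : Perm (Fin n) => u x) h)
  · obtain ⟨k, rfl⟩ := hsurj g
    have hk : (k * s * k⁻¹).IsSwap := by
      obtain ⟨x, y, hxy, rfl⟩ := hs
      exact ⟨k x, k y, fun h => hxy (k.injective h), by simp [mul_swap_eq_swap_mul]⟩
    rw [← map_inv, ← map_mul, ← map_mul, ← map_mul, ← map_pow, swap_mul_swap_pow_six hs hk,
      map_one]
end

section
/- Let f : S_4 → S_4 be a group homomorphism whose image is not cyclic. Then either f is an inner automorphism, or there exists σ ∈ S_4 such that f((1 4)) = σ (1 2) σ⁻¹, f((2 4)) = σ (1 3) σ⁻¹, and f((3 4)) = σ (2 3) σ⁻¹ (i.e., f is conjugate to the exceptional map S_4 → S_3 composed with the standard inclusion S_3 → S_4). -/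
/-!
The star transpositions `(0 3)`, `(1 3)`, `(2 3)` generate `S_4`, so `f` is determined by their
images `a, b, c`. These satisfy the Coxeter-type relations of the star transpositions: they square
to one, any two satisfy the braid relation `x * y * x = y * x * y`, and `a` commutes with `b * c *
b` (the image of `(1 2)`). A finite enumeration (`star_triples`) shows that the solutions of these
relations in `S_4` are `a = b = c`, the simultaneous conjugates of the star transpositions
themselves, and the simultaneous conjugates of the exceptional triple `(0 1)`, `(0 2)`, `(1 2)`.
In the first case the image of `f` is generated by `a`, hence cyclic; in the second `f` agrees
with a conjugation on generators.
-/

open Equiv in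
lemma closure_star_swaps :
    Subgroup.closure ({swap 0 3, swap 1 3, swap 2 3} : Set (Perm (Fin 4))) = ⊤ := by
  rw [eq_top_iff, ← Perm.closure_isSwap, Subgroup.closure_le]
  set H := Subgroup.closure ({swap 0 3, swap 1 3, swap 2 3} : Set (Perm (Fin 4)))
  have star : ∀ i : Fin 4, swap i 3 ∈ H := by
    intro i
    fin_cases i
    · exact Subgroup.subset_closure (by simp)
    · exact Subgroup.subset_closure (by simp)
    · exact Subgroup.subset_closure (by simp)
    · rw [show swap (⟨3, by decide⟩ : Fin 4) 3 = 1 by decide]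
      exact H.one_mem
  have conj : ∀ i j : Fin 4, i ≠ j → swap i j = swap i 3 * swap j 3 * swap i 3 ∨
      swap i j = swap i 3 ∨ swap i j = swap j 3 := by decide
  rintro _ ⟨i, j, hij, rfl⟩
  rcases conj i j hij with h | h | h <;> rw [h]
  · exact H.mul_mem (H.mul_mem (star i) (star j)) (star i)
  · exact star i
  · exact star j

open Equiv in
set_option synthInstance.maxSize 10000 in
set_option synthInstance.maxHeartbeats 0 in
/-- Classification of the triples in `S_4` satisfying the relations of the star transpositions. -/
lemma star_triples : ∀ a : Perm (Fin 4), a * a = 1 → ∀ b : Perm (Fin 4), b * b = 1 →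
    a * b * a = b * a * b → ∀ c : Perm (Fin 4), c * c = 1 → b * c * b = c * b * c →
    a * c * a = c * a * c → a * (b * c * b) = b * c * b * a →
    (b = a ∧ c = a) ∨
    (∃ σ : Perm (Fin 4), a = σ * swap 0 3 * σ⁻¹ ∧ b = σ * swap 1 3 * σ⁻¹ ∧
      c = σ * swap 2 3 * σ⁻¹) ∨
    (∃ σ : Perm (Fin 4), a = σ * swap 0 1 * σ⁻¹ ∧ b = σ * swap 0 2 * σ⁻¹ ∧
      c = σ * swap 1 2 * σ⁻¹) := by
  decide +kernel

theorem noncyclic_endo_S4_inner_or_exceptional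
    (f : Equiv.Perm (Fin 4) →* Equiv.Perm (Fin 4)) (hnc : ¬ IsCyclic f.range) :
    (∃ σ : Equiv.Perm (Fin 4), ∀ x : Equiv.Perm (Fin 4), f x = σ * x * σ⁻¹) ∨
    (∃ σ : Equiv.Perm (Fin 4),
      f (Equiv.swap 0 3) = σ * Equiv.swap 0 1 * σ⁻¹ ∧
      f (Equiv.swap 1 3) = σ * Equiv.swap 0 2 * σ⁻¹ ∧
      f (Equiv.swap 2 3) = σ * Equiv.swap 1 2 * σ⁻¹) := by
  rcases star_triples (f (Equiv.swap 0 3)) (by simp [← map_mul])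
    (f (Equiv.swap 1 3)) (by simp [← map_mul])
    (by simp only [← map_mul]; exact congrArg f (by decide))
    (f (Equiv.swap 2 3)) (by simp [← map_mul])
    (by simp only [← map_mul]; exact congrArg f (by decide))
    (by simp only [← map_mul]; exact congrArg f (by decide))
    (by simp only [← map_mul]; exact congrArg f (by decide))
    with ⟨hb, hc⟩ | ⟨σ, ha, hb, hc⟩ | h
  · refine absurd ?_ hnc
    have hrange : f.range = Subgroup.zpowers (f (Equiv.swap 0 3)) := by
      rw [MonoidHom.range_eq_map, ← closure_star_swaps, MonoidHom.map_closure,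
        Subgroup.zpowers_eq_closure]
      simp [Set.image_insert_eq, hb, hc]
    rw [hrange]
    infer_instance
  · left
    refine ⟨σ, fun x => ?_⟩
    have hf : f = (MulAut.conj σ).toMonoidHom := by
      refine MonoidHom.eq_of_eqOn_dense closure_star_swaps ?_
      rintro _ (rfl | rfl | rfl)
      · simpa using ha
      · simpa using hb
      · simpa using hc
    rw [hf]
    simp
  · exact Or.inr h
end

section
/- Let X be a totally symmetric subset of a group G with |X| ≥ 3. If an element c and its inverse c⁻¹ both belong to X, then c = c⁻¹. -/
theorem inverse_pair_in_totally_symmetric {G : Type*} [Group G]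
    (X : Set G) (hX : IsTotallySymmetric X) (hcard : 3 ≤ X.encard)
    (c : G) (hc : c ∈ X) (hc' : c⁻¹ ∈ X) : c = c⁻¹ := by
  classical
  by_contra hne
  obtain ⟨d, hd, hdc⟩ : ∃ d ∈ X, d ∉ ({c, c⁻¹} : Set G) := by
    by_contra! h
    have h₁ : (3 : ℕ∞) ≤ 2 := hcard.trans ((Set.encard_le_encard h).trans (Set.encard_pair hne).le)
    exact absurd h₁ (by decide)
  simp only [Set.mem_insert_iff, Set.mem_singleton_iff, not_or] at hdc
  obtain ⟨g, hg⟩ := hX (Equiv.swap ⟨c⁻¹, hc'⟩ ⟨d, hd⟩)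
  have h₁ := hg ⟨c, hc⟩
  have h₂ := hg ⟨c⁻¹, hc'⟩
  rw [Equiv.swap_apply_of_ne_of_ne (by simpa using hne)
    (by simpa using Ne.symm hdc.1)] at h₁
  rw [Equiv.swap_apply_left] at h₂
  dsimp only at h₁ h₂
  apply hdc.2
  rw [← h₂, ← conj_inv, h₁]
end
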